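/- Fix δ > 0 and ε > 0. Then there exist C > 0, η > 0 and n₀ such that for all n ≥ n₀ and all M, k with M/N ∈ [δ, 1−δ] and k/n ∈ [δ, 1−δ], with probability at least 1 − exp(−n^η) over G = G_{n,M} the following holds: for all z ∈ ℝ, |P_S(W ≤ √(Σ₁₁)·z) − P(Z' ≤ z)| ≤ C·n^{−1/4+ε}, where Z' is a standard normal random variable and Σ₁₁ = Var_S(W) = (2KK̄/(n²N²(n−2)(n−3)))·(M(N−M) + ((k−2)/(k̄−1))·N·V). -/

import Mathlib

/-!
The proof is Stein's method for a fixed graph `G`, followed by concentration over `G`.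

Let `a` be the adjacency matrix of `G` centred by `p = M / N`, so that `n W = wS a S` for a uniform
`k`-set `S`. Consider the chain that swaps a vertex of `S` with one of its complement. The function
`ψ(S) = wS a S + ((k - 1) / n) ∑_{v ∈ S} ∑_u a u v` solves the Poisson equation of this chain with
right-hand side `wS` (`sum_dpsi`); reversibility (`swap_sum`) then gives the integration by parts
formula `stein_identity`. Combined with Taylor's formula it yields `stein_bound`: the Stein
discrepancy of `W / σ` is small if all swap increments are at most `L` and the statistic `Tstat`
(the sum of products of the increments of `ψ` and of `wS`, suitably normalised) is close to `σ²`, for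
all `S` outside an exceptional family. The indicator of a half-line is smoothed at scale
`Δ = n^(-1/4)` (`stein_package`, `kolmogorov_of_stein`).

For fixed `S`, the swap increments are linear forms, and `Tstat` is a quadratic form, in the
independent edge indicators of `G(n,p)`. Truncating the linear forms and applying McDiarmid's
inequality (`quad_conc`) shows that `Tstat` is within `n^(-1/2 + 2τ)` of its mean `sig0`, and the
increments are below `n^(1/2 + τ)`, except with stretched exponentially small probability (`T_conc`).
The degree statistic `V` is handled in the same way (`V_conc`), and this makes the graph-dependent
`Σ₁₁` close to `sig0` (`sigV_close`); it is also bounded away from `0` (`sigV_lower`). Since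
`p = M / N`, conditioning on the number of edges costs only a factor `N + 1` (`transfer`), which
carries these estimates to `G(n,M)`, and Markov's inequality turns a bound for every `S` and most `G`
into one for most `G` and most `S` (`quench`). For such `G`, `good_graph` collects the errors: smoothing costs
`n^(-1/4)` and the Taylor remainder `Δ⁻¹ L³ / n² = n^(-1/4 + 3τ)`. The theorem uses `τ = ε / 4`.
-/

open Finset MeasureTheory ProbabilityTheory

noncomputable section

/-- Uniform probability of an event `P` over a finite sample space `Ω`. -/
def Pru {α : Type*} (Ω : Finset α) (P : α → Prop) : ℝ := by
  classical exact ((Ω.filter P).card : ℝ) / Ω.card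

/-- Expectation of `f` under the uniform distribution on `Ω`. -/
def Exu {α : Type*} (Ω : Finset α) (f : α → ℝ) : ℝ := (∑ a ∈ Ω, f a) / Ω.card

/-- Variance of `f` under the uniform distribution on `Ω`. -/
def Varu {α : Type*} (Ω : Finset α) (f : α → ℝ) : ℝ := Exu Ω (fun a => (f a - Exu Ω f) ^ 2)

/-- Conditional expectation of `f` given the value of `g`, under uniform distribution on `Ω`. -/
def condExpU {α β : Type*} (Ω : Finset α) (f : α → ℝ) (g : α → β) (ω : α) : ℝ := by
  classical exact Exu (Ω.filter (fun ω' => g ω' = g ω)) f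

/-- The edge set of the complete graph on `[n]`. -/
def completeEdges (n : ℕ) : Finset (Sym2 (Fin n)) := by
  classical exact Finset.univ.filter (fun e => ¬ e.IsDiag)

/-- A finset of `Sym2`s is a graph if it has no loops. -/
def IsGraph {n : ℕ} (G : Finset (Sym2 (Fin n))) : Prop := ∀ e ∈ G, ¬ e.IsDiag

/-- The sample space of `G_{n,M}`: all graphs on `[n]` with exactly `M` edges. -/
def graphsM (n M : ℕ) : Finset (Finset (Sym2 (Fin n))) := by
  classical exact (completeEdges n).powerset.filter (fun G => G.card = M)

/-- `e(S)`: number of edges of `G` with both endpoints in `S`. -/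
def edgesIn {n : ℕ} (G : Finset (Sym2 (Fin n))) (S : Finset (Fin n)) : ℕ := by
  classical exact (G.filter (fun e => ∀ v ∈ e, v ∈ S)).card

/-- `d_S(v)`: number of neighbours of `v` (in graph `G`) lying in `S`. -/
def dS {n : ℕ} (G : Finset (Sym2 (Fin n))) (S : Finset (Fin n)) (v : Fin n) : ℕ := by
  classical exact (S.filter (fun w => s(v, w) ∈ G)).card

/-- All `k`-element subsets of `[n]`. -/
def kSets (n k : ℕ) : Finset (Finset (Fin n)) := Finset.univ.powersetCard k

/-- Probability of an event under the uniform random graph `G_{n,M}`. -/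
def PrGnM (n M : ℕ) (P : Finset (Sym2 (Fin n)) → Prop) : ℝ := Pru (graphsM n M) P

/-- Probability of an event under the binomial random graph `G_{n,p}`. -/
def PrGnp (n : ℕ) (p : ℝ) (P : Finset (Sym2 (Fin n)) → Prop) : ℝ := by
  classical exact ∑ G ∈ (completeEdges n).powerset,
    if (P G) then p ^ G.card * (1 - p) ^ ((completeEdges n).card - G.card) else 0

/-- `N = n(n-1)/2` as a real number. -/
def Nr (n : ℕ) : ℝ := (n : ℝ) * ((n : ℝ) - 1) / 2

/-- `K = k(k-1)/2` as a real number. -/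
def Kr (k : ℕ) : ℝ := (k : ℝ) * ((k : ℝ) - 1) / 2

/-- `λ = ((n²-k²)k²/(2n⁴))·(M(N-M)/N²)`. -/
def lamP (n M k : ℕ) : ℝ :=
  (((n:ℝ)^2 - (k:ℝ)^2) * (k:ℝ)^2 / (2 * (n:ℝ)^4)) * ((M:ℝ) * (Nr n - (M:ℝ)) / (Nr n)^2)

/-- The mean `K·M/N`. -/
def muP (n M k : ℕ) : ℝ := Kr k * (M:ℝ) / Nr n

/-- `W = (e(S) - K·M/N)/n`. -/
def Wfun (n M k : ℕ) (G : Finset (Sym2 (Fin n))) (S : Finset (Fin n)) : ℝ :=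
  ((edgesIn G S : ℝ) - muP n M k) / n

/-- `V = Σ_v d(v)² - n·d(G)²`, i.e. `n` times the degree variance. -/
def Vdeg {n : ℕ} (G : Finset (Sym2 (Fin n))) : ℝ :=
  (∑ v : Fin n, (dS G Finset.univ v : ℝ) ^ 2) - (n:ℝ) * (2 * (G.card : ℝ) / n) ^ 2

/-- Gaussian CDF with mean `m` and variance `v`. -/
def gaussCdf (m v z : ℝ) : ℝ := ((gaussianReal m v.toNNReal) (Set.Iic z)).toReal

/-- Gaussian measure of a set, mean `m`, variance `v`. -/
def gaussMeas (m v : ℝ) (A : Set ℝ) : ℝ := ((gaussianReal m v.toNNReal) A).toReal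

/-- Gaussian density with mean `m` and variance `v`. -/
def gaussPdf (m v x : ℝ) : ℝ := gaussianPDFReal m v.toNNReal x

/-- `P(Y ∈ ·)` for `Y ~ Bin(ν, p)`. -/
def binomPr (ν : ℕ) (p : ℝ) (P : ℕ → Prop) : ℝ := by
  classical exact ∑ j ∈ Finset.range (ν + 1),
    if (P j) then (ν.choose j : ℝ) * p ^ j * (1 - p) ^ (ν - j) else 0

/-- Sample space for "uniform `k`-set `S`, then uniform `x ∈ S` and `x̄ ∈ S̄`". -/
def SwapΩ (n k : ℕ) : Finset (Σ _ : Finset (Fin n), Fin n × Fin n) :=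
  (kSets n k).sigma (fun S => S ×ˢ Sᶜ)

/-- A triple `(a, r, t)` is valid for `β`. -/
def ValidTriple (β : ℝ) (n a r t : ℕ) : Prop :=
  a ≤ r ∧
  (∃ c : ℝ, 1/2 ≤ c ∧ c ≤ 1 ∧ (a : ℝ) = c * (t:ℝ) ^ ((3:ℝ)/2) * (n:ℝ) ^ (2*β - 1/2)) ∧
  (r : ℝ) ≤ (n:ℝ) ^ (-β) * Real.sqrt ((n:ℝ) * (t:ℝ))

set_option linter.unusedSectionVars false

/-! ### Gaussian kernel and tail bounds -/

/-- The unnormalised standard Gaussian density `exp (-x² / 2)`. -/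
def gk (x : ℝ) : ℝ := Real.exp (-(x ^ 2 / 2))

lemma gk_pos (x : ℝ) : 0 < gk x := Real.exp_pos _

lemma gk_continuous : Continuous gk := by unfold gk; fun_prop

lemma gk_neg (x : ℝ) : gk (-x) = gk x := by simp [gk]

lemma gk_hasDerivAt (x : ℝ) : HasDerivAt gk (-x * gk x) x := by
  have h : HasDerivAt (fun x : ℝ => -(x ^ 2 / 2)) (-x) x := by
    exact ((hasDerivAt_pow 2 x).div_const 2).fun_neg.congr_deriv (by simp)
  exact h.exp.congr_deriv (by unfold gk; ring)

lemma gk_eq (x : ℝ) : gk x = Real.exp (-(1/2 : ℝ) * x ^ 2) := by unfold gk; congr 1; ring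

lemma gk_integrable : Integrable gk := by
  have := integrable_exp_neg_mul_sq (b := 1/2) (by norm_num)
  exact this.congr (ae_of_all _ fun x => (gk_eq x).symm)

lemma mul_gk_integrable : Integrable (fun x => x * gk x) := by
  have := integrable_mul_exp_neg_mul_sq (b := 1/2) (by norm_num)
  exact this.congr (ae_of_all _ fun x => by simp only [gk_eq])

lemma sq_gk_integrable : Integrable (fun x => x ^ 2 * gk x) := by
  have := integrable_rpow_mul_exp_neg_mul_sq (b := 1/2) (by norm_num) (s := 2) (by norm_num)
  exact this.congr (ae_of_all _ fun x => by simp only [gk_eq]; norm_num)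

lemma gk_integral : ∫ x, gk x = Real.sqrt (2 * Real.pi) := by
  have := integral_gaussian (1/2)
  simp only [gk_eq]; rw [this]; congr 1; field_simp

lemma gk_tendsto : Filter.Tendsto gk Filter.atTop (nhds 0) := by
  have h2 : Filter.Tendsto (fun x : ℝ => -(x^2/2)) Filter.atTop Filter.atBot := by
    apply Filter.tendsto_neg_atTop_atBot.comp
    exact (Filter.tendsto_pow_atTop (by norm_num)).atTop_div_const (by norm_num)
  exact Real.tendsto_exp_atBot.comp h2

lemma mul_gk_tendsto : Filter.Tendsto (fun x => x * gk x) Filter.atTop (nhds 0) := by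
  have h := Real.tendsto_pow_mul_exp_neg_atTop_nhds_zero 1
  have h2 : Filter.Tendsto (fun x : ℝ => x ^ 2 / 2) Filter.atTop Filter.atTop :=
    (Filter.tendsto_pow_atTop (by norm_num)).atTop_div_const (by norm_num)
  have h3 := h.comp h2
  apply squeeze_zero' (g := fun x : ℝ => 2 * ((x^2/2)^1 * Real.exp (-(x^2/2))))
  · filter_upwards [Filter.eventually_ge_atTop 0] with x hx
    exact mul_nonneg hx (gk_pos x).le
  · filter_upwards [Filter.eventually_ge_atTop 1] with x hx
    have := gk_pos x
    unfold gk at *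
    nlinarith [mul_le_mul_of_nonneg_right (show x ≤ x^2 by nlinarith) this.le]
  · simpa using h3.const_mul 2

/-- Gaussian tail integral (unnormalised). -/
def gQ (w : ℝ) : ℝ := ∫ x in Set.Ioi w, gk x

lemma integral_mul_gk (w : ℝ) : ∫ x in Set.Ioi w, x * gk x = gk w := by
  have := integral_Ioi_of_hasDerivAt_of_tendsto' (a := w) (f := fun x => - gk x)
    (f' := fun x => x * gk x) (m := 0) (fun x _ => by
      exact (gk_hasDerivAt x).fun_neg.congr_deriv (by ring)) mul_gk_integrable.integrableOn
      (by simpa using gk_tendsto.neg)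
  rw [this]; ring

lemma integral_sq_gk (w : ℝ) : ∫ x in Set.Ioi w, x ^ 2 * gk x = w * gk w + gQ w := by
  have := integral_Ioi_of_hasDerivAt_of_tendsto' (a := w) (f := fun x => - (x * gk x))
    (f' := fun x => x ^ 2 * gk x - gk x) (m := 0) (fun x _ => by
      exact ((hasDerivAt_id' x).fun_mul (gk_hasDerivAt x)).fun_neg.congr_deriv (by ring))
      (sq_gk_integrable.sub gk_integrable).integrableOn
      (by simpa using mul_gk_tendsto.neg)
  rw [integral_sub sq_gk_integrable.integrableOn gk_integrable.integrableOn] at this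
  unfold gQ; linarith

lemma gQ_nonneg (w : ℝ) : 0 ≤ gQ w := setIntegral_nonneg measurableSet_Ioi fun x _ => (gk_pos x).le

lemma gQ_mul_le {w : ℝ} : w * gQ w ≤ gk w := by
  rw [← integral_mul_gk w, gQ, ← integral_const_mul]
  refine setIntegral_mono_on (gk_integrable.const_mul w).integrableOn mul_gk_integrable.integrableOn
    measurableSet_Ioi fun x hx => mul_le_mul_of_nonneg_right (le_of_lt hx) (gk_pos x).le

/-- The lower Mills bound, from `0 ≤ ∫_w^∞ (x - w)² gk x`. -/
lemma le_gQ_mul (w : ℝ) : w * gk w ≤ (1 + w ^ 2) * gQ w := by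
  have h0 : 0 ≤ ∫ x in Set.Ioi w, (x - w) ^ 2 * gk x :=
    setIntegral_nonneg measurableSet_Ioi fun x _ => mul_nonneg (sq_nonneg _) (gk_pos x).le
  have h1 : ∫ x in Set.Ioi w, (x - w) ^ 2 * gk x =
      (w * gk w + gQ w) - 2 * w * gk w + w ^ 2 * gQ w := by
    rw [← integral_sq_gk, gQ, ← integral_const_mul, ← integral_mul_gk w, ← integral_const_mul,
      ← integral_sub, ← integral_add]
    · refine integral_congr_ae (ae_of_all _ fun x => ?_); simp only; ring
    · exact (sq_gk_integrable.sub (mul_gk_integrable.const_mul _)).integrableOn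
    · exact (gk_integrable.const_mul _).integrableOn
    · exact sq_gk_integrable.integrableOn
    · exact (mul_gk_integrable.const_mul _).integrableOn
  linarith

lemma gQ_le {w : ℝ} (hw : 0 ≤ w) : gQ w ≤ 5 * gk w := by
  have hpos := gk_pos w
  rcases le_total 1 w with h | h
  · have := gQ_mul_le (w := w)
    nlinarith [gQ_nonneg w]
  · have h1 : gQ w ≤ 2.6 := by
      calc gQ w ≤ ∫ x, gk x := setIntegral_le_integral gk_integrable (ae_of_all _ fun x => (gk_pos x).le)
        _ = Real.sqrt (2 * Real.pi) := gk_integral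
        _ ≤ 2.6 := by
          apply Real.sqrt_le_iff.mpr; constructor; norm_num
          nlinarith [Real.pi_lt_d2]
    have h2 : 0.52 ≤ gk w := by
      unfold gk
      have : -(1/2:ℝ) ≤ -(w^2/2) := by nlinarith
      have h3 := Real.exp_le_exp.mpr this
      have h4 : Real.exp (-(1/2:ℝ)) * Real.exp (1/2) = 1 := by rw [← Real.exp_add]; simp
      have h5 : Real.exp (1/2:ℝ) ≤ 1.7 := by
        have : Real.exp (1/2:ℝ) ^ 2 = Real.exp 1 := by rw [← Real.exp_nat_mul]; norm_num
        nlinarith [Real.exp_one_lt_d9, Real.exp_pos (1/2:ℝ)]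
      nlinarith [Real.exp_pos (-(1/2:ℝ))]
    linarith

section tail
variable {g : ℝ → ℝ} {Lh : ℝ}

lemma g_gk_integrable (hc : Continuous g) (hb : ∀ x, |g x| ≤ 1) : Integrable (fun x => g x * gk x) :=
  gk_integrable.bdd_mul (c := 1) hc.aestronglyMeasurable (ae_of_all _ fun x => by simpa using hb x)

lemma tail_abs_le (hb : ∀ x, |g x| ≤ 1) (w : ℝ) :
    |∫ x in Set.Ioi w, g x * gk x| ≤ gQ w := by
  rw [← Real.norm_eq_abs]
  refine norm_integral_le_of_norm_le gk_integrable.integrableOn (ae_of_all _ fun x => ?_)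
  rw [norm_mul, Real.norm_eq_abs, Real.norm_eq_abs, abs_of_pos (gk_pos x)]
  nlinarith [hb x, gk_pos x]

/-- Second-order estimate of the Gaussian tail of a bounded Lipschitz `g`; it is what keeps the
derivative of `w * steinSol g w` bounded, see `steinSol_second`. -/
lemma tail_second (hc : Continuous g) (hb : ∀ x, |g x| ≤ 1)
    (hL : ∀ x y, |g x - g y| ≤ Lh * |x - y|) {w : ℝ} (hw : 0 ≤ w) :
    |(1 + w ^ 2) * (∫ x in Set.Ioi w, g x * gk x) - w * g w * gk w| ≤ (Lh + 5) * gk w := by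
  have hL0 : 0 ≤ Lh := by have := (abs_nonneg _).trans (hL 1 0); simpa using this
  have hsplit : ∫ x in Set.Ioi w, g x * gk x =
      (∫ x in Set.Ioi w, (g x - g w) * gk x) + g w * gQ w := by
    rw [gQ, ← integral_const_mul, ← integral_add]
    · refine integral_congr_ae (ae_of_all _ fun x => ?_); simp only; ring
    · have := ((g_gk_integrable hc hb).sub (gk_integrable.const_mul (g w)))
      refine (this.congr (ae_of_all _ fun x => ?_)).integrableOn
      simp only [Pi.sub_apply]; ring
    · exact (gk_integrable.const_mul _).integrableOn
  have hJ : |∫ x in Set.Ioi w, (g x - g w) * gk x| ≤ Lh * (gk w - w * gQ w) := by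
    have e : Lh * (gk w - w * gQ w) = ∫ x in Set.Ioi w, Lh * (x * gk x - w * gk x) := by
      rw [integral_const_mul, integral_sub mul_gk_integrable.integrableOn
        (gk_integrable.const_mul _).integrableOn, integral_mul_gk, integral_const_mul, gQ]
    rw [e, ← Real.norm_eq_abs]
    refine norm_integral_le_of_norm_le
      ((mul_gk_integrable.sub (gk_integrable.const_mul w)).const_mul Lh).integrableOn ?_
    refine (ae_restrict_iff' measurableSet_Ioi).mpr (ae_of_all _ fun x hx => ?_)
    rw [norm_mul, Real.norm_eq_abs, Real.norm_eq_abs, abs_of_pos (gk_pos x)]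
    have := hL x w
    rw [abs_of_pos (show 0 < x - w from sub_pos.mpr hx)] at this
    nlinarith [gk_pos x, mul_le_mul_of_nonneg_right this (gk_pos x).le]
  rw [hsplit]
  have e : (1 + w ^ 2) * ((∫ x in Set.Ioi w, (g x - g w) * gk x) + g w * gQ w) - w * g w * gk w =
    (1 + w ^ 2) * (∫ x in Set.Ioi w, (g x - g w) * gk x) + g w * ((1 + w^2) * gQ w - w * gk w) := by
    ring
  rw [e]
  refine (abs_add_le _ _).trans ?_
  rw [abs_mul, abs_mul, abs_of_pos (show 0 < 1 + w ^ 2 by positivity)]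
  have m1 := le_gQ_mul w
  have m2 := gQ_mul_le (w := w)
  have m3 := gQ_le hw
  rw [abs_of_nonneg (show 0 ≤ (1 + w^2) * gQ w - w * gk w by linarith)]
  have a1 : (1 + w ^ 2) * |∫ x in Set.Ioi w, (g x - g w) * gk x| ≤ Lh * gk w := by
    calc _ ≤ (1 + w^2) * (Lh * (gk w - w * gQ w)) := by gcongr
      _ = Lh * ((1 + w^2) * gk w - w * ((1 + w^2) * gQ w)) := by ring
      _ ≤ Lh * gk w := by
        gcongr
        nlinarith [mul_le_mul_of_nonneg_left m1 hw]
  have a2 : |g w| * ((1 + w^2) * gQ w - w * gk w) ≤ 5 * gk w := by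
    calc _ ≤ 1 * ((1 + w^2) * gQ w - w * gk w) := by
          refine mul_le_mul_of_nonneg_right (hb w) (by linarith)
      _ ≤ gQ w := by nlinarith [mul_le_mul_of_nonneg_left m2 hw]
      _ ≤ _ := m3
  linarith
end tail

/-! ### Stein's equation -/

/-- The solution `f` of Stein's equation `f' w - w * f w = g w` that is bounded when `g` is bounded
and `∫ g * gk = 0`. -/
def steinSol (g : ℝ → ℝ) (w : ℝ) : ℝ := Real.exp (w ^ 2 / 2) * ∫ x in Set.Iic w, g x * gk x

lemma exp_mul_gk (w : ℝ) : Real.exp (w ^ 2 / 2) * gk w = 1 := by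
  unfold gk; rw [← Real.exp_add]; simp

section sol
variable {g : ℝ → ℝ} {Lh : ℝ}

lemma steinSol_eq_neg (hc : Continuous g) (hb : ∀ x, |g x| ≤ 1) (h0 : ∫ x, g x * gk x = 0) (w : ℝ) :
    steinSol g w = - (Real.exp (w ^ 2 / 2) * ∫ x in Set.Ioi w, g x * gk x) := by
  have hi := g_gk_integrable hc hb
  have := intervalIntegral.integral_Iic_add_Ioi (b := w) hi.integrableOn hi.integrableOn
  rw [h0] at this
  unfold steinSol
  rw [eq_neg_of_add_eq_zero_left this]; ring

lemma steinSol_eq_refl (w : ℝ) :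
    steinSol g w = Real.exp ((-w) ^ 2 / 2) * ∫ x in Set.Ioi (-w), g (-x) * gk x := by
  unfold steinSol
  rw [neg_sq]; congr 1
  have := integral_comp_neg_Iic w (fun x => g (-x) * gk x)
  rw [← this]; simp [gk_neg]

lemma steinSol_hasDerivAt (hc : Continuous g) (hb : ∀ x, |g x| ≤ 1) (w : ℝ) :
    HasDerivAt (steinSol g) (w * steinSol g w + g w) w := by
  have hi := g_gk_integrable hc hb
  have hcont : Continuous (fun x => g x * gk x) := hc.mul gk_continuous
  have e : ∀ w, ∫ x in Set.Iic w, g x * gk x =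
      (∫ x in Set.Iic 0, g x * gk x) + ∫ x in (0:ℝ)..w, g x * gk x := fun w => by
    rw [← intervalIntegral.integral_Iic_sub_Iic hi.integrableOn hi.integrableOn]; ring
  have h1 : HasDerivAt (fun w => ∫ x in Set.Iic w, g x * gk x) (g w * gk w) w := by
    rw [funext e]
    exact ((hcont.integral_hasStrictDerivAt 0 w).hasDerivAt).const_add _
  have h2 : HasDerivAt (fun w : ℝ => Real.exp (w ^ 2 / 2)) (Real.exp (w ^ 2 / 2) * w) w := by
    have : HasDerivAt (fun w : ℝ => w ^ 2 / 2) w w :=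
      ((hasDerivAt_pow 2 w).div_const 2).congr_deriv (by simp)
    exact this.exp
  refine (h2.fun_mul h1).congr_deriv ?_
  have := exp_mul_gk w
  unfold steinSol
  linear_combination g w * this

lemma steinSol_mul_le (hc : Continuous g) (hb : ∀ x, |g x| ≤ 1) (h0 : ∫ x, g x * gk x = 0) (w : ℝ) :
    |w * steinSol g w| ≤ 1 := by
  have key : ∀ (g : ℝ → ℝ) (v : ℝ), (∀ x, |g x| ≤ 1) → 0 ≤ v →
      v * (Real.exp (v ^ 2 / 2) * |∫ x in Set.Ioi v, g x * gk x|) ≤ 1 := by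
    intro g v hb hv
    have := tail_abs_le hb v
    rw [← exp_mul_gk v]
    calc _ = Real.exp (v^2/2) * (v * |∫ x in Set.Ioi v, g x * gk x|) := by ring
      _ ≤ Real.exp (v^2/2) * (v * gQ v) := by gcongr
      _ ≤ _ := by gcongr; exact gQ_mul_le
  rcases le_total 0 w with h | h
  · rw [steinSol_eq_neg hc hb h0, abs_mul, abs_neg, abs_mul, Real.abs_exp, abs_of_nonneg h]
    exact key g w hb h
  · rw [steinSol_eq_refl, abs_mul, abs_mul, Real.abs_exp, abs_of_nonpos h]
    exact key (fun x => g (-x)) (-w) (fun x => hb _) (by linarith)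

/-- The left-hand side is the derivative of `w * steinSol g w`. -/
lemma steinSol_second (hc : Continuous g) (hb : ∀ x, |g x| ≤ 1) (h0 : ∫ x, g x * gk x = 0)
    (hL : ∀ x y, |g x - g y| ≤ Lh * |x - y|) (w : ℝ) :
    |(1 + w ^ 2) * steinSol g w + w * g w| ≤ Lh + 5 := by
  have key : ∀ (g : ℝ → ℝ) (v : ℝ), Continuous g → (∀ x, |g x| ≤ 1) →
      (∀ x y, |g x - g y| ≤ Lh * |x - y|) → 0 ≤ v →
      |(1 + v ^ 2) * (Real.exp (v ^ 2 / 2) * ∫ x in Set.Ioi v, g x * gk x) - v * g v| ≤ Lh + 5 := by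
    intro g v hc hb hL hv
    have h1 := tail_second hc hb hL hv
    have h2 := exp_mul_gk v
    have e : (1 + v ^ 2) * (Real.exp (v ^ 2 / 2) * ∫ x in Set.Ioi v, g x * gk x) - v * g v =
        Real.exp (v ^ 2 / 2) *
          ((1 + v ^ 2) * (∫ x in Set.Ioi v, g x * gk x) - v * g v * gk v) := by
      linear_combination (v * g v) * h2
    rw [e, abs_mul, Real.abs_exp]
    calc _ ≤ Real.exp (v^2/2) * ((Lh + 5) * gk v) := by gcongr
      _ = Lh + 5 := by linear_combination (Lh + 5) * h2
  rcases le_total 0 w with h | h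
  · have := key g w hc hb hL h
    rw [steinSol_eq_neg hc hb h0, ← abs_neg]
    convert this using 2; ring
  · have := key (fun x => g (-x)) (-w) (hc.comp continuous_neg) (fun x => hb _)
      (fun x y => (hL _ _).trans_eq (by rw [← abs_neg (x - y)]; congr 2; ring)) (by linarith)
    rw [steinSol_eq_refl]
    convert this using 2; simp

lemma stein_taylor (hc : Continuous g) (hb : ∀ x, |g x| ≤ 1) (h0 : ∫ x, g x * gk x = 0)
    (hL : ∀ x y, |g x - g y| ≤ Lh * |x - y|) (a b : ℝ) :
    |steinSol g b - steinSol g a - (a * steinSol g a + g a) * (b - a)| ≤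
      (2 * Lh + 5) * (b - a) ^ 2 := by
  have hlip : ∀ x y, |x * steinSol g x - y * steinSol g y| ≤ (Lh + 5) * |x - y| := by
    intro x y
    have := Convex.norm_image_sub_le_of_norm_hasDerivWithin_le (s := Set.univ) (C := Lh + 5)
      (f := fun w => w * steinSol g w)
      (f' := fun w => (1 + w ^ 2) * steinSol g w + w * g w) (x := y) (y := x)
      (fun w _ => (((hasDerivAt_id' w).fun_mul (steinSol_hasDerivAt hc hb w)).congr_deriv
        (by ring)).hasDerivWithinAt)
      (fun w _ => steinSol_second hc hb h0 hL w) convex_univ trivial trivial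
    exact this
  have hL0 : 0 ≤ Lh := by have := (abs_nonneg _).trans (hL 1 0); simpa using this
  have := Convex.norm_image_sub_le_of_norm_hasDerivWithin_le (s := Set.uIcc a b)
      (C := (2 * Lh + 5) * |b - a|)
      (f := fun w => steinSol g w - (a * steinSol g a + g a) * w)
      (f' := fun w => (w * steinSol g w + g w) - (a * steinSol g a + g a)) (x := a) (y := b)
      (fun w _ => ((steinSol_hasDerivAt hc hb w).fun_sub
        ((hasDerivAt_id' w).const_mul _)).congr_deriv (by ring) |>.hasDerivWithinAt)
      (fun w hw => ?_) (convex_uIcc a b) Set.left_mem_uIcc Set.right_mem_uIcc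
  · rw [Real.norm_eq_abs, Real.norm_eq_abs] at this
    have e : (2 * Lh + 5) * (b - a) ^ 2 = (2 * Lh + 5) * |b - a| * |b - a| := by
      rw [mul_assoc, ← pow_two, sq_abs]
    rw [e]
    convert this using 2; ring
  · rw [Real.norm_eq_abs]
    have h1 := hlip w a
    have h2 := hL w a
    have h3 : |w - a| ≤ |b - a| := Set.abs_sub_left_of_mem_uIcc hw
    calc _ = |(w * steinSol g w - a * steinSol g a) + (g w - g a)| := by congr 1; ring
      _ ≤ (Lh + 5) * |w - a| + Lh * |w - a| := (abs_add_le _ _).trans (add_le_add h1 h2)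
      _ = (2 * Lh + 5) * |w - a| := by ring
      _ ≤ _ := by gcongr
end sol

lemma gauss_integral (h : ℝ → ℝ) :
    ∫ x, h x ∂(gaussianReal 0 1) = (Real.sqrt (2 * Real.pi))⁻¹ * ∫ x, h x * gk x := by
  rw [integral_gaussianReal_eq_integral_smul (by norm_num), ← integral_const_mul]
  refine integral_congr_ae (ae_of_all _ fun x => ?_)
  simp only [gaussianPDFReal, gk, smul_eq_mul, NNReal.coe_one, mul_one, sub_zero]
  rw [neg_div]; ring

/-- The piecewise linear function that is `1` up to `z` and `0` from `z + Δ` on. -/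
def ramp (z Δ x : ℝ) : ℝ := max 0 (min 1 ((z + Δ - x) / Δ))

lemma ramp_nonneg (z Δ x : ℝ) : 0 ≤ ramp z Δ x := le_max_left _ _
lemma ramp_le_one (z Δ x : ℝ) : ramp z Δ x ≤ 1 := max_le zero_le_one (min_le_left _ _)
lemma ramp_continuous (z Δ : ℝ) : Continuous (ramp z Δ) := by unfold ramp; fun_prop
lemma ramp_eq_one {z Δ x : ℝ} (hΔ : 0 < Δ) (h : x ≤ z) : ramp z Δ x = 1 := by
  unfold ramp
  have : 1 ≤ (z + Δ - x) / Δ := by rw [le_div_iff₀ hΔ]; linarith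
  rw [min_eq_left this]; simp
lemma ramp_eq_zero {z Δ x : ℝ} (hΔ : 0 < Δ) (h : z + Δ ≤ x) : ramp z Δ x = 0 := by
  unfold ramp
  have : (z + Δ - x) / Δ ≤ 0 := div_nonpos_of_nonpos_of_nonneg (by linarith) hΔ.le
  exact max_eq_left ((min_le_right _ _).trans this)
lemma ramp_lip {z Δ : ℝ} (hΔ : 0 < Δ) (x y : ℝ) : |ramp z Δ x - ramp z Δ y| ≤ (1 / Δ) * |x - y| := by
  unfold ramp
  calc _ ≤ |min 1 ((z + Δ - x) / Δ) - min 1 ((z + Δ - y) / Δ)| := by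
        rw [max_comm, max_comm 0]; exact abs_max_sub_max_le_abs _ _ _
    _ ≤ max |(1:ℝ) - 1| |(z + Δ - x) / Δ - (z + Δ - y) / Δ| := abs_min_sub_min_le_max _ _ _ _
    _ = |(z + Δ - x) / Δ - (z + Δ - y) / Δ| := by simp
    _ = |(1 / Δ) * (y - x)| := by congr 1; ring
    _ = _ := by rw [abs_mul, abs_of_pos (by positivity), abs_sub_comm]

lemma gauss_cdf_mono {z w : ℝ} (h : z ≤ w) :
    (gaussianReal 0 1).real (Set.Iic z) ≤ (gaussianReal 0 1).real (Set.Iic w) :=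
  measureReal_mono (Set.Iic_subset_Iic.mpr h)

lemma gauss_cdf_lip (z : ℝ) {Δ : ℝ} (hΔ : 0 ≤ Δ) :
    (gaussianReal 0 1).real (Set.Iic (z + Δ)) ≤ (gaussianReal 0 1).real (Set.Iic z) + Δ := by
  have h1 : (gaussianReal 0 1).real (Set.Iic (z + Δ)) ≤
      (gaussianReal 0 1).real (Set.Iic z) + (gaussianReal 0 1).real (Set.Ioc z (z + Δ)) := by
    rw [← Set.Iic_union_Ioc_eq_Iic (show z ≤ z + Δ by linarith)]
    exact measureReal_union_le _ _
  have h2 : (gaussianReal 0 1).real (Set.Ioc z (z + Δ)) ≤ Δ := by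
    rw [measureReal_def, gaussianReal_apply_eq_integral _ (by norm_num), ENNReal.toReal_ofReal
      (setIntegral_nonneg measurableSet_Ioc fun x _ => gaussianPDFReal_nonneg _ _ _)]
    have := norm_setIntegral_le_of_norm_le_const (μ := volume) (s := Set.Ioc z (z + Δ)) (C := 1)
      (f := gaussianPDFReal 0 1) (by simp) (fun x _ => by
        rw [Real.norm_eq_abs, abs_of_nonneg (gaussianPDFReal_nonneg _ _ _)]
        simp only [gaussianPDFReal]
        have a1 : (Real.sqrt (2 * Real.pi * (1:NNReal)))⁻¹ ≤ 1 := by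
          apply inv_le_one_of_one_le₀
          apply Real.one_le_sqrt.mpr
          have := Real.pi_gt_three
          norm_num; linarith
        have a2 : Real.exp (-(x - 0) ^ 2 / (2 * (1:NNReal))) ≤ 1 := by
          apply Real.exp_le_one_iff.mpr
          have := sq_nonneg x
          simp only [sub_zero, NNReal.coe_one]; linarith
        calc _ ≤ (1:ℝ) * 1 := by gcongr
          _ = 1 := by norm_num)
    refine (le_abs_self _).trans (this.trans ?_)
    simp [hΔ]
  linarith

/-- Stein's equation for the test function `h = ramp z Δ`, with `f'` bounded and a second-order
Taylor estimate for `f`; the Gaussian mean `μ` of `h` is within `Δ` of the distribution function. -/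
lemma stein_package (z : ℝ) {Δ : ℝ} (hΔ : 0 < Δ) (hΔ1 : Δ ≤ 1) :
    ∃ (f f' h : ℝ → ℝ) (μ : ℝ),
      (∀ w, f' w - w * f w = h w - μ) ∧ (∀ w, |f' w| ≤ 2) ∧
      (∀ a b, |f b - f a - f' a * (b - a)| ≤ 7 / Δ * (b - a) ^ 2) ∧
      (∀ w, 0 ≤ h w) ∧ (∀ w, h w ≤ 1) ∧ (∀ w, w ≤ z → h w = 1) ∧ (∀ w, z + Δ ≤ w → h w = 0) ∧
      (gaussianReal 0 1).real (Set.Iic z) ≤ μ ∧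
      μ ≤ (gaussianReal 0 1).real (Set.Iic z) + Δ := by
  set μ : ℝ := ∫ x, ramp z Δ x ∂(gaussianReal 0 1) with hμ
  have hramp : Integrable (ramp z Δ) (gaussianReal 0 1) :=
    Integrable.of_bound (C := 1) (ramp_continuous z Δ).aestronglyMeasurable
      (ae_of_all _ fun x => by
        rw [Real.norm_eq_abs, abs_of_nonneg (ramp_nonneg _ _ _)]; exact ramp_le_one _ _ _)
  have hind : ∀ t : ℝ, ∫ x, (Set.Iic t).indicator (fun _ => (1:ℝ)) x ∂(gaussianReal 0 1) =
      (gaussianReal 0 1).real (Set.Iic t) := fun t => by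
    rw [integral_indicator measurableSet_Iic]; simp
  have hindi : ∀ t : ℝ, Integrable ((Set.Iic t).indicator (fun _ => (1:ℝ))) (gaussianReal 0 1) :=
    fun t => (integrable_const 1).indicator measurableSet_Iic
  have hμ1 : (gaussianReal 0 1).real (Set.Iic z) ≤ μ := by
    rw [← hind z]
    refine integral_mono (hindi z) hramp fun x => ?_
    by_cases hx : x ≤ z
    · simp [Set.indicator, hx, ramp_eq_one hΔ hx]
    · simp [Set.indicator, hx, ramp_nonneg]
  have hμ2 : μ ≤ (gaussianReal 0 1).real (Set.Iic (z + Δ)) := by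
    rw [← hind (z + Δ)]
    refine integral_mono hramp (hindi _) fun x => ?_
    by_cases hx : x ≤ z + Δ
    · simp [Set.indicator, hx, ramp_le_one]
    · simp [Set.indicator, hx, ramp_eq_zero hΔ (not_le.mp hx).le]
  have hμ3 := hμ2.trans (gauss_cdf_lip z hΔ.le)
  have hμ0 : 0 ≤ μ := integral_nonneg fun x => ramp_nonneg _ _ _
  have hμ01 : μ ≤ 1 := hμ2.trans measureReal_le_one
  set g : ℝ → ℝ := fun x => ramp z Δ x - μ with hg
  have hc : Continuous g := (ramp_continuous z Δ).sub continuous_const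
  have hb : ∀ x, |g x| ≤ 1 := fun x => by
    rw [abs_le]; constructor <;> simp only [hg] <;> linarith [ramp_nonneg z Δ x, ramp_le_one z Δ x]
  have h0 : ∫ x, g x * gk x = 0 := by
    have h1 := gauss_integral g
    have h2 : ∫ x, g x ∂(gaussianReal 0 1) = 0 := by
      simp only [hg]; rw [integral_sub hramp (integrable_const _)]; simp [hμ]
    rw [h2] at h1
    have h3 : (Real.sqrt (2 * Real.pi))⁻¹ ≠ 0 := by positivity
    rcases mul_eq_zero.mp h1.symm with h | h
    · exact absurd h h3
    · exact h
  have hL : ∀ x y, |g x - g y| ≤ (1 / Δ) * |x - y| := fun x y => by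
    simp only [hg]; rw [sub_sub_sub_cancel_right]; exact ramp_lip hΔ x y
  refine ⟨steinSol g, fun w => w * steinSol g w + g w, ramp z Δ, μ, fun w => by simp [hg],
    fun w => ?_, fun a b => ?_, fun w => ramp_nonneg _ _ _, fun w => ramp_le_one _ _ _,
    fun w hw => ramp_eq_one hΔ hw, fun w hw => ramp_eq_zero hΔ hw, hμ1, hμ3⟩
  · calc _ ≤ |w * steinSol g w| + |g w| := abs_add_le _ _
      _ ≤ 1 + 1 := add_le_add (steinSol_mul_le hc hb h0 w) (hb w)
      _ = 2 := by norm_num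
  · refine (stein_taylor hc hb h0 hL a b).trans ?_
    gcongr
    have : 1 ≤ 1 / Δ := by rw [le_div_iff₀ hΔ]; linarith
    have e : 7 / Δ = 7 * (1 / Δ) := by ring
    rw [e]; linarith

/-! ### Random subsets with independent elements and bounded differences -/

section bern
variable {ι : Type*} [DecidableEq ι]

/-- Expectation of `F` over a random subset of `E` containing each element independently with
probability `p`. -/
def Eb (p : ℝ) (E : Finset ι) (F : Finset ι → ℝ) : ℝ :=
  ∑ G ∈ E.powerset, p ^ G.card * (1 - p) ^ (E.card - G.card) * F G

lemma Eb_empty (p : ℝ) (F : Finset ι → ℝ) : Eb p ∅ F = F ∅ := by simp [Eb]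

lemma Eb_insert (p : ℝ) {E : Finset ι} {e : ι} (he : e ∉ E) (F : Finset ι → ℝ) :
    Eb p (insert e E) F = Eb p E (fun G => (1 - p) * F G + p * F (insert e G)) := by
  unfold Eb
  rw [sum_powerset_insert he, ← sum_add_distrib]
  refine sum_congr rfl fun G hG => ?_
  have hGE := mem_powerset.mp hG
  have hc := card_le_card hGE
  rw [card_insert_of_notMem he, card_insert_of_notMem (fun h => he (hGE h)),
    show E.card + 1 - G.card = (E.card - G.card) + 1 by omega,
    show E.card + 1 - (G.card + 1) = E.card - G.card by omega]
  ring

lemma Eb_mono {p : ℝ} (h0 : 0 ≤ p) (h1 : p ≤ 1) {E : Finset ι} {F F' : Finset ι → ℝ}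
    (h : ∀ G ⊆ E, F G ≤ F' G) : Eb p E F ≤ Eb p E F' := by
  refine sum_le_sum fun G hG => ?_
  have : 0 ≤ p ^ G.card * (1 - p) ^ (E.card - G.card) :=
    mul_nonneg (pow_nonneg h0 _) (pow_nonneg (by linarith) _)
  exact mul_le_mul_of_nonneg_left (h G (mem_powerset.mp hG)) this

lemma Eb_const (p c : ℝ) (E : Finset ι) : Eb p E (fun _ => c) = c := by
  induction E using Finset.induction_on with
  | empty => simp [Eb_empty]
  | insert e E he ih => rw [Eb_insert p he]; convert ih using 2; ext; ring

lemma Eb_add (p : ℝ) (E : Finset ι) (F F' : Finset ι → ℝ) :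
    Eb p E (fun G => F G + F' G) = Eb p E F + Eb p E F' := by
  simp [Eb, mul_add, sum_add_distrib]

lemma Eb_mul_left (p c : ℝ) (E : Finset ι) (F : Finset ι → ℝ) :
    Eb p E (fun G => c * F G) = c * Eb p E F := by
  simp only [Eb, mul_sum]; exact sum_congr rfl fun _ _ => by ring

lemma Eb_sub (p : ℝ) (E : Finset ι) (F F' : Finset ι → ℝ) :
    Eb p E (fun G => F G - F' G) = Eb p E F - Eb p E F' := by
  simp [Eb, mul_sub, sum_sub_distrib]

lemma Eb_sum (p : ℝ) (E : Finset ι) {κ : Type*} (I : Finset κ) (F : κ → Finset ι → ℝ) :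
    Eb p E (fun G => ∑ i ∈ I, F i G) = ∑ i ∈ I, Eb p E (F i) := by
  simp only [Eb, mul_sum]; exact sum_comm

lemma Eb_nonneg {p : ℝ} (h0 : 0 ≤ p) (h1 : p ≤ 1) {E : Finset ι} {F : Finset ι → ℝ}
    (h : ∀ G ⊆ E, 0 ≤ F G) : 0 ≤ Eb p E F := by
  have := Eb_mono h0 h1 (F := fun _ => 0) h; rwa [Eb_const] at this

lemma abs_Eb_le {p : ℝ} (h0 : 0 ≤ p) (h1 : p ≤ 1) {E : Finset ι} {F F' : Finset ι → ℝ}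
    (h : ∀ G ⊆ E, |F G| ≤ F' G) : |Eb p E F| ≤ Eb p E F' := by
  rw [abs_le]
  constructor
  · have := Eb_mono h0 h1 (F := fun G => (-1) * F' G) (F' := F)
      (fun G hG => by linarith [(abs_le.mp (h G hG)).1])
    rw [Eb_mul_left] at this; linarith
  · exact Eb_mono h0 h1 (fun G hG => (abs_le.mp (h G hG)).2)

lemma exp_le_add_exp_sq (x : ℝ) : Real.exp x ≤ x + Real.exp (x ^ 2) := by
  rcases le_or_gt |x| 1 with h | h
  · have h1 := Real.abs_exp_sub_one_sub_id_le h
    have h2 := Real.add_one_le_exp (x ^ 2)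
    have := (abs_le.mp h1).2
    linarith
  · rcases le_total 0 x with h0 | h0
    · rw [abs_of_nonneg h0] at h
      have : Real.exp x ≤ Real.exp (x ^ 2) := Real.exp_le_exp.mpr (by nlinarith)
      linarith
    · rw [abs_of_nonpos h0] at h
      have h1 : Real.exp x ≤ 1 := Real.exp_le_one_iff.mpr h0
      have h2 := Real.add_one_le_exp (x ^ 2)
      nlinarith

/-- Hoeffding-type bound for a two-point distribution; the induction step of `mcdiarmid_mgf`. -/
lemma two_point_exp {p a b c : ℝ} (h0 : 0 ≤ p) (h1 : p ≤ 1) (hc : |b - a| ≤ c) :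
    (1 - p) * Real.exp a + p * Real.exp b ≤ Real.exp ((1 - p) * a + p * b + c ^ 2) := by
  have ha := exp_le_add_exp_sq (a - ((1 - p) * a + p * b))
  have hb := exp_le_add_exp_sq (b - ((1 - p) * a + p * b))
  have hsq : (b - a) ^ 2 ≤ c ^ 2 := sq_le_sq' (by linarith [(abs_le.mp hc).1]) (abs_le.mp hc).2
  have ha' : Real.exp ((a - ((1 - p) * a + p * b)) ^ 2) ≤ Real.exp (c ^ 2) := by
    apply Real.exp_le_exp.mpr
    have : (a - ((1 - p) * a + p * b)) ^ 2 = p ^ 2 * (b - a) ^ 2 := by ring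
    rw [this]; nlinarith [sq_nonneg (b - a), pow_le_one₀ h0 h1 (n := 2)]
  have hb' : Real.exp ((b - ((1 - p) * a + p * b)) ^ 2) ≤ Real.exp (c ^ 2) := by
    apply Real.exp_le_exp.mpr
    have : (b - ((1 - p) * a + p * b)) ^ 2 = (1 - p) ^ 2 * (b - a) ^ 2 := by ring
    rw [this]
    nlinarith [sq_nonneg (b - a), pow_le_one₀ (show 0 ≤ 1 - p by linarith)
      (show 1 - p ≤ 1 by linarith) (n := 2)]
  have key : (1 - p) * Real.exp (a - ((1 - p) * a + p * b)) +
      p * Real.exp (b - ((1 - p) * a + p * b)) ≤ Real.exp (c ^ 2) := by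
    have e1 := mul_le_mul_of_nonneg_left (ha.trans (add_le_add_right ha' _))
      (show 0 ≤ 1 - p by linarith)
    have e2 := mul_le_mul_of_nonneg_left (hb.trans (add_le_add_right hb' _)) h0
    nlinarith
  set m := (1 - p) * a + p * b
  rw [Real.exp_add]
  have ea : Real.exp a = Real.exp m * Real.exp (a - m) := by rw [← Real.exp_add]; congr 1; ring
  have eb : Real.exp b = Real.exp m * Real.exp (b - m) := by rw [← Real.exp_add]; congr 1; ring
  rw [ea, eb]
  have := mul_le_mul_of_nonneg_left key (Real.exp_pos m).le
  nlinarith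

/-- Bounded-differences exponential moment bound on the Bernoulli cube. -/
lemma mcdiarmid_mgf {p : ℝ} (h0 : 0 ≤ p) (h1 : p ≤ 1) (c : ι → ℝ) (E : Finset ι) :
    ∀ F : Finset ι → ℝ, (∀ e ∈ E, ∀ G, |F (insert e G) - F G| ≤ c e) →
      Eb p E (fun G => Real.exp (F G)) ≤ Real.exp (Eb p E F + ∑ e ∈ E, c e ^ 2) := by
  induction E using Finset.induction_on with
  | empty => intro F _; simp [Eb_empty]
  | insert e E he ih =>
    intro F hF
    rw [Eb_insert p he, Eb_insert p he, sum_insert he]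
    calc _ ≤ Eb p E (fun G => Real.exp (((1 - p) * F G + p * F (insert e G)) + c e ^ 2)) :=
          Eb_mono h0 h1 fun G _ => two_point_exp h0 h1 (hF e (mem_insert_self _ _) G)
      _ ≤ Real.exp (Eb p E (fun G => ((1 - p) * F G + p * F (insert e G)) + c e ^ 2) +
            ∑ e ∈ E, c e ^ 2) := by
          apply ih
          intro e' he' G
          have k1 := hF e' (mem_insert_of_mem he') G
          have k2 := hF e' (mem_insert_of_mem he') (insert e G)
          rw [insert_comm] at k2
          rw [abs_le] at *
          have q : 0 ≤ 1 - p := by linarith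
          constructor <;> nlinarith
      _ = _ := by rw [Eb_add, Eb_const, add_assoc]

open Classical in
/-- Probability that a random subset of `E`, containing each element independently with probability
`p`, satisfies `P`. -/
def Pb (p : ℝ) (E : Finset ι) (P : Finset ι → Prop) : ℝ := Eb p E (fun G => if P G then 1 else 0)

lemma Pb_mono {p : ℝ} (h0 : 0 ≤ p) (h1 : p ≤ 1) {E : Finset ι} {P Q : Finset ι → Prop}
    (h : ∀ G ⊆ E, P G → Q G) : Pb p E P ≤ Pb p E Q := by
  refine Eb_mono h0 h1 fun G hG => ?_
  by_cases hP : P G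
  · simp [hP, h G hG hP]
  · by_cases hQ : Q G <;> simp [hP, hQ]

lemma Pb_or {p : ℝ} (h0 : 0 ≤ p) (h1 : p ≤ 1) {E : Finset ι} (P Q : Finset ι → Prop) :
    Pb p E (fun G => P G ∨ Q G) ≤ Pb p E P + Pb p E Q := by
  unfold Pb
  rw [← Eb_add]
  refine Eb_mono h0 h1 fun G _ => ?_
  by_cases hP : P G <;> by_cases hQ : Q G <;> simp [hP, hQ]

lemma Pb_exists {p : ℝ} (h0 : 0 ≤ p) (h1 : p ≤ 1) {E : Finset ι} {κ : Type*} (I : Finset κ)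
    (P : κ → Finset ι → Prop) :
    Pb p E (fun G => ∃ i ∈ I, P i G) ≤ ∑ i ∈ I, Pb p E (P i) := by
  classical
  unfold Pb
  rw [← Eb_sum]
  refine Eb_mono h0 h1 fun G _ => ?_
  split_ifs with h
  · obtain ⟨i, hi, hP⟩ := h
    have := single_le_sum (f := fun i => if P i G then (1:ℝ) else 0)
      (fun j _ => by split_ifs <;> norm_num) hi
    simpa [hP] using this
  · exact sum_nonneg fun j _ => by split_ifs <;> norm_num

lemma mcdiarmid_upper {p : ℝ} (h0 : 0 ≤ p) (h1 : p ≤ 1) (c : ι → ℝ) (E : Finset ι)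
    (F : Finset ι → ℝ) (hF : ∀ e ∈ E, ∀ G, |F (insert e G) - F G| ≤ c e) {σ t : ℝ}
    (hσ : 0 < σ) (hc : ∑ e ∈ E, c e ^ 2 ≤ σ) (ht : 0 ≤ t) :
    Pb p E (fun G => t ≤ F G - Eb p E F) ≤ Real.exp (-(t ^ 2 / (4 * σ))) := by
  set θ := t / (2 * σ) with hθ
  have hθ0 : 0 ≤ θ := by positivity
  have hm := mcdiarmid_mgf h0 h1 (fun e => θ * c e) E (fun G => θ * F G) (fun e he G => by
    rw [← mul_sub, abs_mul, abs_of_nonneg hθ0]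
    exact mul_le_mul_of_nonneg_left (hF e he G) hθ0)
  rw [Eb_mul_left] at hm
  have h2 : ∑ e ∈ E, (θ * c e) ^ 2 = θ ^ 2 * ∑ e ∈ E, c e ^ 2 := by
    rw [mul_sum]; exact sum_congr rfl fun _ _ => by ring
  rw [h2] at hm
  calc _ ≤ Eb p E (fun G => Real.exp (-(θ * (t + Eb p E F))) * Real.exp (θ * F G)) := by
        refine Eb_mono h0 h1 fun G _ => ?_
        rw [← Real.exp_add]
        split_ifs with h
        · rw [← Real.exp_zero]; apply Real.exp_le_exp.mpr; nlinarith
        · exact (Real.exp_pos _).le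
    _ = Real.exp (-(θ * (t + Eb p E F))) * Eb p E (fun G => Real.exp (θ * F G)) := Eb_mul_left ..
    _ ≤ Real.exp (-(θ * (t + Eb p E F))) * Real.exp (θ * Eb p E F + θ ^ 2 * ∑ e ∈ E, c e ^ 2) := by
        gcongr
    _ ≤ _ := by
        rw [← Real.exp_add]
        apply Real.exp_le_exp.mpr
        have : θ ^ 2 * ∑ e ∈ E, c e ^ 2 ≤ θ ^ 2 * σ := by gcongr
        have e1 : θ ^ 2 * σ = t ^ 2 / (4 * σ) := by rw [hθ]; field_simp; ring
        have e2 : θ * t = 2 * (t ^ 2 / (4 * σ)) := by rw [hθ]; field_simp; ring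
        linarith

/-- McDiarmid's inequality (with a non-optimal constant). -/
lemma mcdiarmid {p : ℝ} (h0 : 0 ≤ p) (h1 : p ≤ 1) (c : ι → ℝ) (E : Finset ι)
    (F : Finset ι → ℝ) (hF : ∀ e ∈ E, ∀ G, |F (insert e G) - F G| ≤ c e) {σ t : ℝ}
    (hσ : 0 < σ) (hc : ∑ e ∈ E, c e ^ 2 ≤ σ) (ht : 0 ≤ t) :
    Pb p E (fun G => t ≤ |F G - Eb p E F|) ≤ 2 * Real.exp (-(t ^ 2 / (4 * σ))) := by
  have k1 := mcdiarmid_upper h0 h1 c E F hF hσ hc ht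
  have k2 := mcdiarmid_upper h0 h1 c E (fun G => (-1) * F G) (fun e he G => by
    have := hF e he G
    rw [← abs_neg] at this; convert this using 2; ring) hσ hc ht
  rw [Eb_mul_left] at k2
  calc _ ≤ Pb p E (fun G => t ≤ F G - Eb p E F ∨ t ≤ (-1) * F G - (-1) * Eb p E F) := by
        refine Pb_mono h0 h1 fun G _ h => ?_
        rcases le_abs.mp h with h | h
        · exact Or.inl h
        · right; linarith
    _ ≤ _ := Pb_or h0 h1 _ _
    _ ≤ _ := by linarith

/-- The centred linear form with coefficients `α` in the indicators `e ∈ G`, `e ∈ E`. -/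
def lin (p : ℝ) (E : Finset ι) (α : ι → ℝ) (G : Finset ι) : ℝ :=
  ∑ e ∈ E, α e * ((if e ∈ G then 1 else 0) - p)

lemma lin_insert_out {p : ℝ} {E : Finset ι} {e : ι} (he : e ∉ E) (α : ι → ℝ) {G : Finset ι}
    (hG : G ⊆ E) : lin p (insert e E) α G = lin p E α G - p * α e := by
  unfold lin
  rw [sum_insert he, if_neg (fun h => he (hG h))]; ring

lemma lin_insert_in {p : ℝ} {E : Finset ι} {e : ι} (he : e ∉ E) (α : ι → ℝ) {G : Finset ι} :
    lin p (insert e E) α (insert e G) = lin p E α G + (1 - p) * α e := by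
  unfold lin
  rw [sum_insert he, if_pos (mem_insert_self _ _)]
  have : ∑ x ∈ E, α x * ((if x ∈ insert e G then (1:ℝ) else 0) - p) =
      ∑ x ∈ E, α x * ((if x ∈ G then (1:ℝ) else 0) - p) := by
    refine sum_congr rfl fun x hx => ?_
    have : x ≠ e := fun h => he (h ▸ hx)
    simp [mem_insert, this]
  rw [this]; ring

lemma Eb_congr {p : ℝ} {E : Finset ι} {F F' : Finset ι → ℝ} (h : ∀ G ⊆ E, F G = F' G) :
    Eb p E F = Eb p E F' := sum_congr rfl fun G hG => by rw [h G (mem_powerset.mp hG)]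

lemma Eb_lin_mul (p : ℝ) (E : Finset ι) (α β : ι → ℝ) :
    Eb p E (fun G => lin p E α G * lin p E β G) = p * (1 - p) * ∑ e ∈ E, α e * β e := by
  induction E using Finset.induction_on with
  | empty => simp [Eb_empty, lin]
  | insert e E he ih =>
    rw [Eb_insert p he, sum_insert he, mul_add, ← ih,
      Eb_congr (F' := fun G => lin p E α G * lin p E β G + p * (1 - p) * (α e * β e)), Eb_add,
      Eb_const, add_comm]
    intro G hG
    rw [lin_insert_out he _ hG, lin_insert_out he _ hG, lin_insert_in he, lin_insert_in he]
    ring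

lemma Eb_lin (p : ℝ) (E : Finset ι) (α : ι → ℝ) : Eb p E (lin p E α) = 0 := by
  induction E using Finset.induction_on with
  | empty => simp [Eb_empty, lin]
  | insert e E he ih =>
    rw [Eb_insert p he, ← ih]
    refine Eb_congr fun G hG => ?_
    rw [lin_insert_out he _ hG, lin_insert_in he]; ring

lemma lin_diff {p : ℝ} {E : Finset ι} (α : ι → ℝ) {e : ι} (he : e ∈ E) (G : Finset ι) :
    |lin p E α (insert e G) - lin p E α G| ≤ |α e| := by
  unfold lin
  rw [← sum_sub_distrib, sum_eq_single e]
  · by_cases h : e ∈ G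
    · simp [h]
    · simp [h]; ring_nf; exact le_rfl
  · intro b _ hb; simp [mem_insert, hb]
  · intro h; exact absurd he h

lemma abs_lin_le {p : ℝ} (h0 : 0 ≤ p) (h1 : p ≤ 1) {E : Finset ι} (α : ι → ℝ) (G : Finset ι) :
    |lin p E α G| ≤ ∑ e ∈ E, |α e| := by
  unfold lin
  refine (abs_sum_le_sum_abs _ _).trans (sum_le_sum fun e _ => ?_)
  rw [abs_mul]
  have : |(if e ∈ G then (1:ℝ) else 0) - p| ≤ 1 := by
    split_ifs <;> rw [abs_le] <;> constructor <;> linarith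
  nlinarith [abs_nonneg (α e)]

/-- Truncation to `[-L, L]`. -/
def clip (L x : ℝ) : ℝ := max (-L) (min x L)

lemma clip_lip (L x y : ℝ) : |clip L x - clip L y| ≤ |x - y| := by
  unfold clip
  rw [max_comm, max_comm (-L)]
  refine (abs_max_sub_max_le_abs _ _ _).trans ?_
  refine (abs_min_sub_min_le_max _ _ _ _).trans ?_
  simp

lemma abs_clip_le {L : ℝ} (hL : 0 ≤ L) (x : ℝ) : |clip L x| ≤ L := by
  unfold clip
  rw [abs_le]
  exact ⟨le_max_left _ _, max_le (by linarith) (min_le_right _ _)⟩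

lemma clip_eq {L x : ℝ} (h : |x| ≤ L) : clip L x = x := by
  unfold clip
  rw [min_eq_left (abs_le.mp h).2, max_eq_right (abs_le.mp h).1]

lemma abs_clip_le_abs {L : ℝ} (hL : 0 ≤ L) (x : ℝ) : |clip L x| ≤ |x| := by
  have := clip_lip L x 0
  rwa [clip_eq (x := 0) (by simpa), sub_zero, sub_zero] at this

lemma lin_tail {p : ℝ} (h0 : 0 ≤ p) (h1 : p ≤ 1) {E : Finset ι} {α : ι → ℝ} {A L : ℝ} (hA : 0 < A)
    (hα : ∑ e ∈ E, α e ^ 2 ≤ A) (hL : 0 ≤ L) :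
    Pb p E (fun G => L ≤ |lin p E α G|) ≤ 2 * Real.exp (-(L ^ 2 / (4 * A))) := by
  have := mcdiarmid h0 h1 (fun e => |α e|) E (lin p E α) (fun e he G => lin_diff α he G) hA
    (by simpa using hα) hL
  simpa [Eb_lin] using this

/-- Concentration of a sum of products of linear forms. The linear forms are truncated at `L`, which
gives the sum bounded differences `L * D`, so that `mcdiarmid` applies. No linear form exceeds `L`
outside an event covered by the first term on the right; the `8 * B ^ 2` term in the deviation bounds
the change of the mean caused by the truncation. -/
lemma quad_conc {p : ℝ} (h0 : 0 ≤ p) (h1 : p ≤ 1) {E : Finset ι} {κ : Type*} (I : Finset κ)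
    (α β : κ → ι → ℝ) {A D L t B : ℝ} (hA : 0 < A) (hD : 0 < D) (hL : 0 < L) (ht : 0 ≤ t)
    (hE : 0 < E.card)
    (hα : ∀ i ∈ I, ∑ e ∈ E, α i e ^ 2 ≤ A) (hβ : ∀ i ∈ I, ∑ e ∈ E, β i e ^ 2 ≤ A)
    (hαB : ∀ i ∈ I, ∑ e ∈ E, |α i e| ≤ B) (hβB : ∀ i ∈ I, ∑ e ∈ E, |β i e| ≤ B)
    (hI : ∀ e ∈ E, ∑ i ∈ I, (|α i e| + |β i e|) ≤ D) :
    Pb p E (fun G => (∃ i ∈ I, L ≤ |lin p E (α i) G| ∨ L ≤ |lin p E (β i) G|) ∨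
      t + I.card * (8 * B ^ 2 * Real.exp (-(L ^ 2 / (4 * A)))) ≤
        |∑ i ∈ I, lin p E (α i) G * lin p E (β i) G -
          p * (1 - p) * ∑ i ∈ I, ∑ e ∈ E, α i e * β i e|) ≤
      I.card * (4 * Real.exp (-(L ^ 2 / (4 * A)))) +
        2 * Real.exp (-(t ^ 2 / (4 * (E.card * (L * D) ^ 2)))) := by
  set q := Real.exp (-(L ^ 2 / (4 * A))) with hq
  have hone : ∀ i ∈ I, Pb p E (fun G => L ≤ |lin p E (α i) G| ∨ L ≤ |lin p E (β i) G|) ≤ 4 * q := by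
    intro i hi
    have := Pb_or h0 h1 (E := E) (fun G => L ≤ |lin p E (α i) G|) (fun G => L ≤ |lin p E (β i) G|)
    linarith [lin_tail h0 h1 hA (hα i hi) hL.le, lin_tail h0 h1 hA (hβ i hi) hL.le]
  have hbad : Pb p E (fun G => ∃ i ∈ I, L ≤ |lin p E (α i) G| ∨ L ≤ |lin p E (β i) G|) ≤
      I.card * (4 * q) := by
    refine (Pb_exists h0 h1 I _).trans ?_
    have := sum_le_sum hone
    rwa [sum_const, nsmul_eq_mul] at this
  set F : Finset ι → ℝ := fun G => ∑ i ∈ I, clip L (lin p E (α i) G) * clip L (lin p E (β i) G)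
    with hF
  have hdiff : ∀ e ∈ E, ∀ G, |F (insert e G) - F G| ≤ L * D := by
    intro e he G
    simp only [hF]
    rw [← sum_sub_distrib]
    refine (abs_sum_le_sum_abs _ _).trans ?_
    refine (sum_le_sum (g := fun i => L * (|α i e| + |β i e|)) fun i _ => ?_).trans ?_
    · set a := clip L (lin p E (α i) (insert e G))
      set a' := clip L (lin p E (α i) G)
      set b := clip L (lin p E (β i) (insert e G))
      set b' := clip L (lin p E (β i) G)
      have ha : |a - a'| ≤ |α i e| := (clip_lip _ _ _).trans (lin_diff _ he G)
      have hb : |b - b'| ≤ |β i e| := (clip_lip _ _ _).trans (lin_diff _ he G)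
      have hbL : |b| ≤ L := abs_clip_le hL.le _
      have haL : |a'| ≤ L := abs_clip_le hL.le _
      calc |a * b - a' * b'| = |(a - a') * b + a' * (b - b')| := by congr 1; ring
        _ ≤ |a - a'| * |b| + |a'| * |b - b'| := by
            rw [← abs_mul, ← abs_mul]; exact abs_add_le _ _
        _ ≤ |α i e| * L + L * |β i e| := by gcongr
        _ = _ := by ring
    · rw [← mul_sum]; exact mul_le_mul_of_nonneg_left (hI e he) hL.le
  have hmean : |Eb p E F - p * (1 - p) * ∑ i ∈ I, ∑ e ∈ E, α i e * β i e| ≤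
      I.card * (8 * B ^ 2 * q) := by
    have e1 : Eb p E F - p * (1 - p) * ∑ i ∈ I, ∑ e ∈ E, α i e * β i e =
        ∑ i ∈ I, Eb p E (fun G => clip L (lin p E (α i) G) * clip L (lin p E (β i) G) -
          lin p E (α i) G * lin p E (β i) G) := by
      simp only [hF]
      rw [Eb_sum, mul_sum, ← sum_sub_distrib]
      refine sum_congr rfl fun i _ => ?_
      rw [Eb_sub, Eb_lin_mul]
    rw [e1]
    refine (abs_sum_le_sum_abs _ _).trans ?_
    have := sum_le_sum (s := I) (f := fun i => |Eb p E (fun G => clip L (lin p E (α i) G) *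
      clip L (lin p E (β i) G) - lin p E (α i) G * lin p E (β i) G)|)
      (g := fun _ => 8 * B ^ 2 * q) (fun i hi => ?_)
    · rwa [sum_const, nsmul_eq_mul] at this
    · classical
      refine (abs_Eb_le h0 h1 (F' := fun G => (2 * B ^ 2) *
        (if (L ≤ |lin p E (α i) G| ∨ L ≤ |lin p E (β i) G|) then 1 else 0))
        fun G _ => ?_).trans ?_
      · split_ifs with h
        · have hx := (abs_lin_le h0 h1 (E := E) (α i) G).trans (hαB i hi)
          have hy := (abs_lin_le h0 h1 (E := E) (β i) G).trans (hβB i hi)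
          set x := lin p E (α i) G
          set y := lin p E (β i) G
          have hB0 : 0 ≤ B := (abs_nonneg _).trans hx
          calc |clip L x * clip L y - x * y| ≤ |clip L x| * |clip L y| + |x| * |y| := by
                rw [← abs_mul, ← abs_mul]; exact abs_sub _ _
            _ ≤ |x| * |y| + |x| * |y| := by
                refine add_le_add_left (mul_le_mul (abs_clip_le_abs hL.le _)
                  (abs_clip_le_abs hL.le _) (abs_nonneg _) (abs_nonneg _)) _
            _ ≤ B * B + B * B := by gcongr
            _ = _ := by ring
        · push Not at h
          rw [clip_eq h.1.le, clip_eq h.2.le]; simp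
      · rw [Eb_mul_left]
        have := hone i hi
        unfold Pb at this
        calc _ ≤ 2 * B ^ 2 * (4 * q) := by
              refine mul_le_mul_of_nonneg_left ?_ (by positivity)
              exact (Eb_congr fun G _ => by congr).trans_le this
          _ = _ := by ring
  have hconc := mcdiarmid h0 h1 (fun _ => L * D) E F hdiff (σ := E.card * (L * D) ^ 2)
    (by have : (0:ℝ) < E.card := by exact_mod_cast hE
        positivity) (by simp) ht
  refine (Pb_mono h0 h1 (Q := fun G => (∃ i ∈ I, L ≤ |lin p E (α i) G| ∨ L ≤ |lin p E (β i) G|) ∨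
    t ≤ |F G - Eb p E F|) fun G _ h => ?_).trans ((Pb_or h0 h1 _ _).trans (add_le_add hbad hconc))
  by_cases hb : ∃ i ∈ I, L ≤ |lin p E (α i) G| ∨ L ≤ |lin p E (β i) G|
  · exact Or.inl hb
  · right
    have h2 := h.resolve_left hb
    push Not at hb
    have hFG : F G = ∑ i ∈ I, lin p E (α i) G * lin p E (β i) G := by
      refine sum_congr rfl fun i hi => ?_
      rw [clip_eq (hb i hi).1.le, clip_eq (hb i hi).2.le]
    rw [← hFG] at h2
    have h3 := abs_sub_le (F G) (Eb p E F) (p * (1 - p) * ∑ i ∈ I, ∑ e ∈ E, α i e * β i e)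
    linarith

end bern

/-! ### From `G(n,p)` to `G(n,M)` -/

/-- The binomial probability at its mode `M = N p` is at least `1 / (N + 1)`. -/
lemma binom_mode {N M : ℕ} (hM : 0 < M) (hMN : M < N) {p : ℝ} (hp : p = (M:ℝ) / N) :
    1 ≤ ((N:ℝ) + 1) * ((N.choose M : ℝ) * (p ^ M * (1 - p) ^ (N - M))) := by
  have hN : (0:ℝ) < N := by exact_mod_cast hM.trans hMN
  have hM0 : (0:ℝ) < M := by exact_mod_cast hM
  have hMN' : (M:ℝ) < N := by exact_mod_cast hMN
  have hp0 : 0 < p := by rw [hp]; positivity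
  have hq0 : 0 < 1 - p := by rw [hp, sub_pos, div_lt_one hN]; exact hMN'
  have hpN : p * N = M := by rw [hp]; field_simp
  set t : ℕ → ℝ := fun j => (N.choose j : ℝ) * (p ^ j * (1 - p) ^ (N - j)) with ht
  have ht0 : ∀ j, 0 ≤ t j := fun j => by simp only [ht]; positivity
  have hrec : ∀ j, j < N → t (j + 1) * ((j + 1) * (1 - p)) = t j * ((N - j) * p) := by
    intro j hj
    have h1 : (N.choose (j+1) : ℝ) * (j + 1) = N.choose j * (N - j) := by
      have := Nat.choose_succ_right_eq N j
      have h2 : ((N - j : ℕ) : ℝ) = N - j := by push_cast [hj.le]; ring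
      rw [← h2]; exact_mod_cast this
    have h2 : N - j = (N - (j + 1)) + 1 := by omega
    simp only [ht]
    rw [h2, pow_succ, pow_succ]
    linear_combination (p ^ j * p * (1-p)^(N-(j+1)) * (1-p)) * h1
  have hup : ∀ d, d ≤ M → t (M - d) ≤ t M := by
    intro d
    induction d with
    | zero => intro _; simp
    | succ d ih =>
      intro hd
      refine le_trans ?_ (ih (by omega))
      have hr := hrec (M - (d + 1)) (by omega)
      rw [show M - (d + 1) + 1 = M - d by omega] at hr
      have hc : ((M - (d + 1) : ℕ) : ℝ) = M - d - 1 := by push_cast [hd]; ring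
      rw [hc] at hr
      have hdM : (d:ℝ) + 1 ≤ M := by exact_mod_cast hd
      have hd0 : (0:ℝ) ≤ d := by positivity
      have hpos : 0 < ((M:ℝ) - d - 1 + 1) * (1 - p) := mul_pos (by linarith) hq0
      refine le_of_mul_le_mul_right ?_ hpos
      rw [hr]
      refine mul_le_mul_of_nonneg_left ?_ (ht0 _)
      nlinarith
  have hdown : ∀ d, M + d ≤ N → t (M + d) ≤ t M := by
    intro d
    induction d with
    | zero => intro _; simp
    | succ d ih =>
      intro hd
      refine le_trans ?_ (ih (by omega))
      have hr := hrec (M + d) (by omega)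
      push_cast at hr
      have hd0 : (0:ℝ) ≤ d := by positivity
      have hpos : 0 < ((M:ℝ) + d + 1) * (1 - p) := mul_pos (by linarith) hq0
      refine le_of_mul_le_mul_right ?_ hpos
      rw [show M + (d + 1) = M + d + 1 by ring, hr]
      refine mul_le_mul_of_nonneg_left ?_ (ht0 _)
      nlinarith
  have hall : ∀ j ∈ range (N + 1), t j ≤ t M := by
    intro j hj
    have hj' := mem_range.mp hj
    rcases le_total j M with h | h
    · have := hup (M - j) (by omega)
      rwa [show M - (M - j) = j by omega] at this
    · have := hdown (j - M) (by omega)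
      rwa [show M + (j - M) = j by omega] at this
  have hsum : ∑ j ∈ range (N + 1), t j = 1 := by
    have := add_pow p (1 - p) N
    rw [show p + (1 - p) = 1 by ring, one_pow] at this
    rw [this]
    exact sum_congr rfl fun j _ => by simp only [ht]; ring
  have := sum_le_sum hall
  rw [hsum, sum_const, card_range, nsmul_eq_mul] at this
  push_cast at this
  exact this

lemma card_completeEdges (n : ℕ) : (completeEdges n).card = n.choose 2 := by
  unfold completeEdges
  classical
  have := Sym2.card_subtype_not_diag (α := Fin n)
  rw [Fintype.card_fin] at this
  rw [← this, Fintype.card_subtype]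

lemma card_completeEdges_real (n : ℕ) : ((completeEdges n).card : ℝ) = Nr n := by
  rw [card_completeEdges, Nat.cast_choose_two, Nr]

lemma mem_graphsM {n M : ℕ} {G : Finset (Sym2 (Fin n))} :
    G ∈ graphsM n M ↔ G ⊆ completeEdges n ∧ G.card = M := by
  simp [graphsM]

lemma card_graphsM (n M : ℕ) : (graphsM n M).card = (completeEdges n).card.choose M := by
  rw [← card_powersetCard]
  congr 1
  ext G; rw [mem_graphsM, mem_powersetCard]

/-- Events in `G_{n,M}` cost at most a factor `N + 1` compared with `G_{n,p}`, `p = M / N`. -/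
lemma transfer {n M : ℕ} (hM : 0 < M) (hMN : M < (completeEdges n).card)
    (P : Finset (Sym2 (Fin n)) → Prop) {p : ℝ} (hp : p = (M:ℝ) / Nr n) :
    PrGnM n M P ≤ (Nr n + 1) * Pb p (completeEdges n) P := by
  classical
  rw [← card_completeEdges_real] at *
  set N := (completeEdges n).card with hN
  have hmode := binom_mode hM hMN hp
  have hNr : (0:ℝ) < N := by exact_mod_cast hM.trans hMN
  have hp0 : 0 ≤ p := by rw [hp]; positivity
  have hp1 : 0 ≤ 1 - p := by
    rw [hp, sub_nonneg, div_le_one hNr]; exact_mod_cast hMN.le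
  have hsub : ((((graphsM n M).filter P).card : ℝ)) * (p ^ M * (1 - p) ^ (N - M)) ≤
      Pb p (completeEdges n) P := by
    unfold Pb Eb
    rw [← nsmul_eq_mul, ← sum_const]
    have hss : (graphsM n M).filter P ⊆ (completeEdges n).powerset := fun G hG =>
      mem_powerset.mpr (mem_graphsM.mp (mem_filter.mp hG).1).1
    refine le_trans (sum_le_sum fun G hG => ?_)
      (sum_le_sum_of_subset_of_nonneg hss fun G _ _ => ?_)
    · rw [mem_filter, mem_graphsM] at hG
      beta_reduce
      rw [if_pos hG.2, hG.1.2, mul_one]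
    · beta_reduce
      split_ifs
      · positivity
      · simp
  have hchoose : (0:ℝ) < (N.choose M : ℝ) := by exact_mod_cast Nat.choose_pos hMN.le
  unfold PrGnM Pru
  rw [card_graphsM, ← hN, div_le_iff₀ hchoose]
  have hc : (0:ℝ) ≤ (((graphsM n M).filter P).card : ℝ) := by positivity
  calc _ ≤ (((graphsM n M).filter P).card : ℝ) *
        (((N:ℝ) + 1) * ((N.choose M : ℝ) * (p ^ M * (1 - p) ^ (N - M)))) := by
        convert le_mul_of_one_le_right hc hmode
    _ = ((N:ℝ) + 1) * ((((graphsM n M).filter P).card : ℝ) * (p ^ M * (1 - p) ^ (N - M))) *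
        (N.choose M : ℝ) := by ring
    _ ≤ _ := by gcongr

/-! ### Uniform probabilities -/

section unif
variable {α : Type*}

lemma Pru_le_one (Ω : Finset α) (P : α → Prop) : Pru Ω P ≤ 1 := by
  classical
  unfold Pru
  apply div_le_one_of_le₀
  · exact_mod_cast card_filter_le _ _
  · positivity

lemma Pru_nonneg (Ω : Finset α) (P : α → Prop) : 0 ≤ Pru Ω P := by
  classical
  unfold Pru; positivity

open Classical in
lemma Pru_eq_sum (Ω : Finset α) (P : α → Prop) :
    Pru Ω P = (∑ a ∈ Ω, if P a then (1:ℝ) else 0) / Ω.card := by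
  unfold Pru; rw [sum_boole]

lemma Pru_mono {Ω : Finset α} {P Q : α → Prop} (h : ∀ a ∈ Ω, P a → Q a) : Pru Ω P ≤ Pru Ω Q := by
  classical
  unfold Pru
  gcongr with a ha
  exact fun hP => h a ha hP

lemma Pru_or (Ω : Finset α) (P Q : α → Prop) :
    Pru Ω (fun a => P a ∨ Q a) ≤ Pru Ω P + Pru Ω Q := by
  classical
  rw [Pru_eq_sum, Pru_eq_sum, Pru_eq_sum, ← add_div, ← sum_add_distrib]
  gcongr with a
  by_cases hP : P a <;> by_cases hQ : Q a <;> simp [hP, hQ]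

lemma Pru_compl {Ω : Finset α} (hΩ : Ω.Nonempty) (P : α → Prop) :
    Pru Ω P = 1 - Pru Ω (fun a => ¬ P a) := by
  classical
  have : (0:ℝ) < Ω.card := by exact_mod_cast hΩ.card_pos
  rw [Pru_eq_sum, Pru_eq_sum, eq_sub_iff_add_eq, ← add_div, ← sum_add_distrib,
    div_eq_one_iff_eq this.ne', card_eq_sum_ones, Nat.cast_sum]
  refine sum_congr rfl fun a _ => ?_
  by_cases hP : P a <;> simp [hP]

/-- If a relation is rare for every fixed `b`, then for most `a` it is rare in `b`
(Markov's inequality). -/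
lemma quench {β : Type*} (Ω : Finset α) (Λ : Finset β) (R : α → β → Prop) {ρ s : ℝ} (hs : 0 < s)
    (h : ∀ b ∈ Λ, Pru Ω (fun a => R a b) ≤ s * ρ) (hρ : 0 ≤ ρ) :
    Pru Ω (fun a => s < Pru Λ (R a)) ≤ ρ := by
  classical
  have key : s * Pru Ω (fun a => s < Pru Λ (R a)) ≤ s * ρ := by
    calc s * Pru Ω (fun a => s < Pru Λ (R a)) ≤ (∑ a ∈ Ω, Pru Λ (R a)) / Ω.card := by
          rw [Pru_eq_sum, ← mul_div_assoc, mul_sum]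
          gcongr with a
          split_ifs with h
          · linarith
          · simpa using Pru_nonneg _ _
      _ = (∑ b ∈ Λ, Pru Ω (fun a => R a b)) / Λ.card := by
          simp only [Pru_eq_sum]
          rw [← sum_div, ← sum_div, sum_comm, div_right_comm]
      _ ≤ (∑ b ∈ Λ, s * ρ) / Λ.card := by gcongr with b hb; exact h b hb
      _ ≤ s * ρ := by
          rw [sum_const, nsmul_eq_mul]
          rcases (Nat.eq_zero_or_pos Λ.card) with h0 | h0
          · rw [h0]; simp; positivity
          · have : (0:ℝ) < Λ.card := by exact_mod_cast h0
            field_simp; exact le_rfl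
  exact le_of_mul_le_mul_left key hs
end unif

/-! ### The swap chain on `k`-sets -/

section pair
variable {n : ℕ}

/-- Half the sum of `a` over `S × S`. For the centred adjacency matrix of a graph this is the centred
number of edges inside `S`. -/
def wS (a : Fin n → Fin n → ℝ) (S : Finset (Fin n)) : ℝ := (∑ u ∈ S, ∑ v ∈ S, a u v) / 2

/-- Replace `x` by `y` in `S`. -/
def swp (S : Finset (Fin n)) (x y : Fin n) : Finset (Fin n) := insert y (S.erase x)

/-- Increment of `wS` when `x ∈ S` is replaced by `y ∉ S` (see `wS_swp`). -/
def dw (a : Fin n → Fin n → ℝ) (S : Finset (Fin n)) (x y : Fin n) : ℝ :=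
  ∑ u ∈ S.erase x, a u y - ∑ u ∈ S, a u x

def colSum (a : Fin n → Fin n → ℝ) (v : Fin n) : ℝ := ∑ u, a u v

/-- The function `ψ`; for `β = (k - 1) / n` the generator of the swap chain on `k`-sets maps it to a
multiple of `wS` (see `sum_dpsi`). -/
def psiS (a : Fin n → Fin n → ℝ) (β : ℝ) (S : Finset (Fin n)) : ℝ :=
  wS a S + β * ∑ v ∈ S, colSum a v

/-- Increment of `psiS` under a swap. -/
def dpsi (a : Fin n → Fin n → ℝ) (β : ℝ) (S : Finset (Fin n)) (x y : Fin n) : ℝ :=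
  dw a S x y + β * (colSum a y - colSum a x)

lemma wS_insert {a : Fin n → Fin n → ℝ} (hs : ∀ u v, a u v = a v u) (hd : ∀ u, a u u = 0)
    {R : Finset (Fin n)} {z : Fin n} (hz : z ∉ R) : wS a (insert z R) = wS a R + ∑ u ∈ R, a u z := by
  unfold wS
  rw [sum_insert hz]
  simp_rw [sum_insert hz]
  rw [sum_add_distrib, hd, sum_congr rfl fun u _ => hs z u]
  ring

lemma wS_swp {a : Fin n → Fin n → ℝ} (hs : ∀ u v, a u v = a v u) (hd : ∀ u, a u u = 0)
    {S : Finset (Fin n)} {x y : Fin n} (hx : x ∈ S) (hy : y ∉ S) :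
    wS a (swp S x y) = wS a S + dw a S x y := by
  have h1 := wS_insert hs hd (notMem_erase x S)
  rw [insert_erase hx] at h1
  have h2 := wS_insert hs hd (R := S.erase x) (z := y) (fun h => hy (mem_of_mem_erase h))
  have h3 : ∑ u ∈ S, a u x = ∑ u ∈ S.erase x, a u x := by
    rw [← add_sum_erase S _ hx, hd, zero_add]
  unfold swp dw
  rw [h2, h1, h3]; ring

lemma psiS_swp {a : Fin n → Fin n → ℝ} (hs : ∀ u v, a u v = a v u) (hd : ∀ u, a u u = 0) (β : ℝ)
    {S : Finset (Fin n)} {x y : Fin n} (hx : x ∈ S) (hy : y ∉ S) :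
    psiS a β (swp S x y) = psiS a β S + dpsi a β S x y := by
  unfold psiS dpsi
  rw [wS_swp hs hd hx hy, swp, sum_insert (fun h => hy (mem_of_mem_erase h)),
    ← add_sum_erase S (colSum a) hx]
  ring

lemma mem_kSets {k : ℕ} {S : Finset (Fin n)} : S ∈ kSets n k ↔ S.card = k := by
  simp [kSets]

/-- Sums over (set, swap) triples are invariant under reversing the swap. -/
lemma swap_sum {k : ℕ} (F : Finset (Fin n) → Fin n → Fin n → ℝ) :
    ∑ S ∈ kSets n k, ∑ x ∈ S, ∑ y ∈ Sᶜ, F S x y =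
      ∑ S ∈ kSets n k, ∑ x ∈ S, ∑ y ∈ Sᶜ, F (swp S x y) y x := by
  simp only [← sum_product']
  rw [sum_sigma', sum_sigma']
  have hmem : ∀ a ∈ (kSets n k).sigma (fun S => S ×ˢ Sᶜ),
      (⟨swp a.1 a.2.1 a.2.2, (a.2.2, a.2.1)⟩ : Σ _ : Finset (Fin n), Fin n × Fin n) ∈
        (kSets n k).sigma (fun S => S ×ˢ Sᶜ) := by
    rintro ⟨S, x, y⟩ h
    simp only [mem_sigma, mem_kSets, mem_product, mem_compl] at h ⊢
    obtain ⟨hS, hx, hy⟩ := h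
    have hxy : x ≠ y := fun h => hy (h ▸ hx)
    refine ⟨?_, by simp [swp], by simp [swp, hxy]⟩
    unfold swp
    rw [card_insert_of_notMem (fun h => hy (mem_of_mem_erase h)), card_erase_of_mem hx]
    have := card_pos.mpr ⟨x, hx⟩; omega
  have hinv : ∀ a ∈ (kSets n k).sigma (fun S => S ×ˢ Sᶜ),
      (⟨swp (swp a.1 a.2.1 a.2.2) a.2.2 a.2.1, (a.2.1, a.2.2)⟩ :
        Σ _ : Finset (Fin n), Fin n × Fin n) = a := by
    rintro ⟨S, x, y⟩ h
    simp only [mem_sigma, mem_kSets, mem_product, mem_compl] at h ⊢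
    obtain ⟨hS, hx, hy⟩ := h
    have : swp (swp S x y) y x = S := by
      unfold swp
      rw [erase_insert (fun h => hy (mem_of_mem_erase h)), insert_erase hx]
    rw [this]
  refine sum_nbij' (fun a => ⟨swp a.1 a.2.1 a.2.2, (a.2.2, a.2.1)⟩)
    (fun a => ⟨swp a.1 a.2.1 a.2.2, (a.2.2, a.2.1)⟩) hmem hmem hinv hinv ?_
  intro a ha
  have := hinv a ha
  have h2 : swp (swp a.1 a.2.1 a.2.2) a.2.2 a.2.1 = a.1 := congrArg Sigma.fst this
  simp only [h2]

/-- `ψ` solves the Poisson equation of the swap chain with right-hand side `wS`. -/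
lemma sum_dpsi {a : Fin n → Fin n → ℝ} (hs : ∀ u v, a u v = a v u)
    (ht : ∑ u, ∑ v, a u v = 0) {k : ℕ} (hn : 0 < n) {S : Finset (Fin n)} (hS : S.card = k) :
    ∑ x ∈ S, ∑ y ∈ Sᶜ, dpsi a (((k:ℝ) - 1) / n) S x y = -(2 * ((n:ℝ) - 1)) * wS a S := by
  have hkn : k ≤ n := by rw [← hS]; simpa using card_le_univ S
  have hcc : ((Sᶜ.card : ℕ) : ℝ) = n - k := by
    rw [card_compl, hS, Fintype.card_fin]; push_cast [hkn]; ring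
  have hn' : (n:ℝ) ≠ 0 := by positivity
  set L := ∑ v ∈ S, colSum a v with hL
  have hA : ∑ v ∈ Sᶜ, colSum a v = - L := by
    have h1 := sum_add_sum_compl S (colSum a)
    have h2 : ∑ v, colSum a v = 0 := by unfold colSum; rw [sum_comm]; exact ht
    linarith
  have hcross : ∑ y ∈ Sᶜ, ∑ u ∈ S, a u y = L - 2 * wS a S := by
    have : L = ∑ u ∈ S, (∑ v ∈ S, a u v + ∑ v ∈ Sᶜ, a u v) := by
      rw [hL]; refine sum_congr rfl fun u _ => ?_
      rw [sum_add_sum_compl]; unfold colSum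
      exact sum_congr rfl fun v _ => hs _ _
    rw [sum_add_distrib] at this
    rw [this, sum_comm, wS]; ring
  have h1 : ∑ x ∈ S, ∑ y ∈ Sᶜ, ∑ u ∈ S.erase x, a u y = ((k:ℝ) - 1) * (L - 2 * wS a S) := by
    have e : ∀ x ∈ S, ∑ y ∈ Sᶜ, ∑ u ∈ S.erase x, a u y =
        (L - 2 * wS a S) - ∑ y ∈ Sᶜ, a x y := by
      intro x hx
      rw [← hcross, ← sum_sub_distrib]
      refine sum_congr rfl fun y _ => ?_
      rw [← add_sum_erase S _ hx]; ring
    rw [sum_congr rfl e, sum_sub_distrib, sum_const, nsmul_eq_mul, hS, sum_comm, hcross]; ring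
  have h2 : ∑ x ∈ S, ∑ y ∈ Sᶜ, ∑ u ∈ S, a u x = (n - k) * (2 * wS a S) := by
    simp only [sum_const, nsmul_eq_mul, hcc]
    rw [← mul_sum, wS, sum_comm]; ring
  have h3 : ∑ x ∈ S, ∑ y ∈ Sᶜ, (colSum a y - colSum a x) = - (n:ℝ) * L := by
    simp only [sum_sub_distrib, sum_const, nsmul_eq_mul, hcc]
    rw [hA, ← mul_sum, hS]; ring
  unfold dpsi dw
  simp only [sum_add_distrib, ← mul_sum]
  rw [h3]
  simp only [sum_sub_distrib] at h1 h2 ⊢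
  rw [h1, h2]
  field_simp; ring

/-- Integration by parts for the swap chain: `sum_dpsi` symmetrised by `swap_sum`. -/
lemma stein_identity {a : Fin n → Fin n → ℝ} (hs : ∀ u v, a u v = a v u) (hd : ∀ u, a u u = 0)
    (ht : ∑ u, ∑ v, a u v = 0) (k : ℕ) (hn : 0 < n) (φ : Finset (Fin n) → ℝ) :
    ∑ S ∈ kSets n k, (4 * ((n:ℝ) - 1)) * (wS a S * φ S) =
      ∑ S ∈ kSets n k, ∑ x ∈ S, ∑ y ∈ Sᶜ,
        dpsi a (((k:ℝ) - 1) / n) S x y * (φ (swp S x y) - φ S) := by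
  set β := ((k:ℝ) - 1) / n
  have h1 := swap_sum (k := k) (fun S x y => (psiS a β (swp S x y) - psiS a β S) * φ S)
  have e1 : ∀ S ∈ kSets n k, ∑ x ∈ S, ∑ y ∈ Sᶜ, (psiS a β (swp S x y) - psiS a β S) * φ S =
      -(2 * ((n:ℝ) - 1)) * wS a S * φ S := by
    intro S hS
    rw [← sum_dpsi hs ht hn (mem_kSets.mp hS), sum_mul]
    refine sum_congr rfl fun x hx => ?_
    rw [sum_mul]
    refine sum_congr rfl fun y hy => ?_
    rw [psiS_swp hs hd β hx (mem_compl.mp hy)]; ring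
  have e2 : ∑ S ∈ kSets n k, ∑ x ∈ S, ∑ y ∈ Sᶜ,
        (psiS a β (swp (swp S x y) y x) - psiS a β (swp S x y)) * φ (swp S x y) =
      ∑ S ∈ kSets n k, ∑ x ∈ S, ∑ y ∈ Sᶜ, (- dpsi a β S x y) * φ (swp S x y) := by
    refine sum_congr rfl fun S _ => sum_congr rfl fun x hx => sum_congr rfl fun y hy => ?_
    have hy' := mem_compl.mp hy
    have : swp (swp S x y) y x = S := by
      unfold swp
      rw [erase_insert (fun h => hy' (mem_of_mem_erase h)), insert_erase hx]
    rw [this, psiS_swp hs hd β hx hy']; ring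
  have e3 : ∑ S ∈ kSets n k, ∑ x ∈ S, ∑ y ∈ Sᶜ, dpsi a β S x y * φ S =
      ∑ S ∈ kSets n k, -(2 * ((n:ℝ) - 1)) * wS a S * φ S := by
    refine sum_congr rfl fun S hS => ?_
    rw [← e1 S hS]
    refine sum_congr rfl fun x hx => sum_congr rfl fun y hy => ?_
    rw [psiS_swp hs hd β hx (mem_compl.mp hy)]; ring
  rw [sum_congr rfl e1] at h1
  rw [e2] at h1
  have e5 : ∑ S ∈ kSets n k, ∑ x ∈ S, ∑ y ∈ Sᶜ, dpsi a β S x y * (φ (swp S x y) - φ S) =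
      ∑ S ∈ kSets n k, ∑ x ∈ S, ∑ y ∈ Sᶜ, dpsi a β S x y * φ (swp S x y) -
        ∑ S ∈ kSets n k, ∑ x ∈ S, ∑ y ∈ Sᶜ, dpsi a β S x y * φ S := by
    simp only [← sum_sub_distrib]
    refine sum_congr rfl fun S _ => sum_congr rfl fun x _ => sum_congr rfl fun y _ => ?_
    ring
  rw [e5, e3]
  simp only [neg_mul, sum_neg_distrib] at h1 ⊢
  have e4 : ∑ S ∈ kSets n k, 4 * ((n:ℝ) - 1) * (wS a S * φ S) =
      2 * ∑ S ∈ kSets n k, 2 * ((n:ℝ) - 1) * wS a S * φ S := by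
    rw [mul_sum]; exact sum_congr rfl fun _ _ => by ring
  linarith

lemma abs_sum_le_card {ι : Type*} (s : Finset ι) (f : ι → ℝ) {c : ℝ} (h : ∀ i ∈ s, |f i| ≤ c) :
    |∑ i ∈ s, f i| ≤ s.card * c := by
  refine (abs_sum_le_sum_abs _ _).trans ?_
  have := sum_le_sum h
  rwa [sum_const, nsmul_eq_mul] at this

lemma cast_card_le (S : Finset (Fin n)) : (S.card : ℝ) ≤ n := by
  have := card_le_univ S
  rw [Fintype.card_fin] at this
  exact_mod_cast this

lemma abs_row_le {a : Fin n → Fin n → ℝ} (ha : ∀ u v, |a u v| ≤ 1) (R : Finset (Fin n)) (v : Fin n) :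
    |∑ u ∈ R, a u v| ≤ n := by
  have := abs_sum_le_card R (fun u => a u v) (fun u _ => ha u v)
  linarith [cast_card_le R]

lemma abs_dw_le {a : Fin n → Fin n → ℝ} (ha : ∀ u v, |a u v| ≤ 1) (S : Finset (Fin n)) (x y : Fin n) :
    |dw a S x y| ≤ 2 * n := by
  unfold dw
  have := abs_sub (∑ u ∈ S.erase x, a u y) (∑ u ∈ S, a u x)
  linarith [abs_row_le ha (S.erase x) y, abs_row_le ha S x]

lemma abs_dpsi_le {a : Fin n → Fin n → ℝ} (ha : ∀ u v, |a u v| ≤ 1) {β : ℝ} (h0 : 0 ≤ β) (h1 : β ≤ 1)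
    (S : Finset (Fin n)) (x y : Fin n) : |dpsi a β S x y| ≤ 4 * n := by
  unfold dpsi colSum
  have k1 := abs_add_le (dw a S x y) (β * (∑ u, a u y - ∑ u, a u x))
  have k2 := abs_sub (∑ u, a u y) (∑ u, a u x)
  have k3 : |∑ u, a u y - ∑ u, a u x| ≤ 2 * n := by
    linarith [abs_row_le ha univ y, abs_row_le ha univ x]
  rw [abs_mul, abs_of_nonneg h0] at k1
  have := abs_dw_le ha S x y
  nlinarith [abs_nonneg (∑ u, a u y - ∑ u, a u x)]

/-- The sum over all swaps of `S` of the products of the increments of `ψ` and of `wS`, normalised so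
that its mean over `k`-sets `S` is the variance of `wS a S / n` (take `φ = wS a` in
`stein_identity`). -/
def Tstat (a : Fin n → Fin n → ℝ) (k : ℕ) (S : Finset (Fin n)) : ℝ :=
  (∑ x ∈ S, ∑ y ∈ Sᶜ, dpsi a (((k:ℝ) - 1) / n) S x y * dw a S x y) / (4 * ((n:ℝ) - 1) * n ^ 2)

lemma abs_double_sum_le (S : Finset (Fin n)) (F : Fin n → Fin n → ℝ) {c : ℝ} (hc : 0 ≤ c)
    (h : ∀ x ∈ S, ∀ y ∈ Sᶜ, |F x y| ≤ c) : |∑ x ∈ S, ∑ y ∈ Sᶜ, F x y| ≤ n ^ 2 * c := by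
  have := abs_sum_le_card S (fun x => ∑ y ∈ Sᶜ, F x y) (c := n * c) (fun x hx => by
    refine (abs_sum_le_card _ _ (h x hx)).trans ?_
    exact mul_le_mul_of_nonneg_right (cast_card_le _) hc)
  refine this.trans ?_
  rw [pow_two, mul_assoc]
  exact mul_le_mul_of_nonneg_right (cast_card_le _) (by positivity)

/-- The bound of Stein's method for a fixed matrix `a`. Sets outside `Bad` contribute the deviation `κ`
of `Tstat` from `σ ^ 2` and a Taylor remainder cubic in the increments, which are at most `L`; on
`Bad` only the trivial bounds of order `n` on the increments are used. -/
lemma stein_bound {a : Fin n → Fin n → ℝ} (hs : ∀ u v, a u v = a v u) (hd : ∀ u, a u u = 0)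
    (ht : ∑ u, ∑ v, a u v = 0) (ha : ∀ u v, |a u v| ≤ 1) {k : ℕ} (hn : 2 ≤ n) (hk : 1 ≤ k)
    (hkn : k ≤ n) {f f' : ℝ → ℝ} {B : ℝ} (hB : 0 ≤ B) (hf' : ∀ w, |f' w| ≤ 2)
    (hf : ∀ u v, |f v - f u - f' u * (v - u)| ≤ B * (v - u) ^ 2)
    {σ κ L s : ℝ} (hσ : 0 < σ) (hκ : 0 ≤ κ) (hL : 0 ≤ L) (Bad : Finset (Fin n) → Prop)
    (hbad : Pru (kSets n k) Bad ≤ s)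
    (hT : ∀ S ∈ kSets n k, ¬ Bad S → |Tstat a k S - σ ^ 2| ≤ κ)
    (hdw : ∀ S ∈ kSets n k, ¬ Bad S → ∀ x ∈ S, ∀ y ∈ Sᶜ, |dw a S x y| ≤ L)
    (hdp : ∀ S ∈ kSets n k, ¬ Bad S → ∀ x ∈ S, ∀ y ∈ Sᶜ,
      |dpsi a (((k:ℝ) - 1) / n) S x y| ≤ L) :
    |Exu (kSets n k) (fun S => f' (wS a S / (n * σ)) - (wS a S / (n * σ)) * f (wS a S / (n * σ)))| ≤
      (2 * κ / σ ^ 2 + B * L ^ 3 / (2 * n ^ 2 * σ ^ 3)) +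
        s * (2 + 8 * n / σ ^ 2 + 8 * n * B / σ ^ 3) := by
  classical
  have hn0 : 0 < n := by omega
  have hnr : (2:ℝ) ≤ n := by exact_mod_cast hn
  have hnpos : (0:ℝ) < n := by linarith
  have hn1 : (n:ℝ) / 2 ≤ n - 1 := by linarith
  have hn1pos : (0:ℝ) < n - 1 := by linarith
  set β := ((k:ℝ) - 1) / n with hβ
  have hβ0 : 0 ≤ β := div_nonneg (by simpa using hk) hnpos.le
  have hβ1 : β ≤ 1 := by
    rw [hβ, div_le_one hnpos]
    have : (k:ℝ) ≤ n := by exact_mod_cast hkn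
    linarith
  set X : Finset (Fin n) → ℝ := fun S => wS a S / (n * σ) with hX
  set rem : Finset (Fin n) → ℝ := fun S => (∑ x ∈ S, ∑ y ∈ Sᶜ, dpsi a β S x y *
    (f (X (swp S x y)) - f (X S) - f' (X S) * (X (swp S x y) - X S))) / (4 * (n - 1) * (n * σ))
    with hrem
  have hdecomp : ∑ S ∈ kSets n k, (f' (X S) - X S * f (X S)) =
      ∑ S ∈ kSets n k, (f' (X S) * (1 - Tstat a k S / σ ^ 2) - rem S) := by
    have hid := stein_identity hs hd ht k hn0 (fun S => f (X S))
    have h2 : ∀ S ∈ kSets n k, f' (X S) * (1 - Tstat a k S / σ ^ 2) - rem S =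
        f' (X S) - (∑ x ∈ S, ∑ y ∈ Sᶜ, dpsi a β S x y * (f (X (swp S x y)) - f (X S))) /
          (4 * (n - 1) * (n * σ)) := by
      intro S _
      have e1 : ∑ x ∈ S, ∑ y ∈ Sᶜ, dpsi a β S x y *
          (f (X (swp S x y)) - f (X S) - f' (X S) * (X (swp S x y) - X S)) =
          (∑ x ∈ S, ∑ y ∈ Sᶜ, dpsi a β S x y * (f (X (swp S x y)) - f (X S))) -
          f' (X S) / (n * σ) * (∑ x ∈ S, ∑ y ∈ Sᶜ, dpsi a β S x y * dw a S x y) := by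
        rw [mul_sum, ← sum_sub_distrib]
        refine sum_congr rfl fun x hx => ?_
        rw [mul_sum, ← sum_sub_distrib]
        refine sum_congr rfl fun y hy => ?_
        have : X (swp S x y) - X S = dw a S x y / (n * σ) := by
          simp only [hX]; rw [wS_swp hs hd hx (mem_compl.mp hy)]; ring
        rw [this]; ring
      simp only [hrem]
      rw [e1, Tstat]
      field_simp
      ring
    rw [sum_congr rfl h2, sum_sub_distrib, sum_sub_distrib, ← sum_div, ← hid, sum_div]
    congr 1
    refine sum_congr rfl fun S _ => ?_
    simp only [hX]
    field_simp
  have hremb : ∀ S c₁ c₂, 0 ≤ c₁ → 0 ≤ c₂ → (∀ x ∈ S, ∀ y ∈ Sᶜ, |dpsi a β S x y| ≤ c₁) →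
      (∀ x ∈ S, ∀ y ∈ Sᶜ, |dw a S x y| ≤ c₂) → |rem S| ≤ B * (c₁ * c₂ ^ 2) / (2 * n ^ 2 * σ ^ 3) := by
    intro S c₁ c₂ hc₁ hc₂ h1 h2
    simp only [hrem]
    rw [abs_div, abs_of_pos (show 0 < 4 * ((n:ℝ) - 1) * (n * σ) by positivity)]
    have := abs_double_sum_le S (fun x y => dpsi a β S x y *
      (f (X (swp S x y)) - f (X S) - f' (X S) * (X (swp S x y) - X S)))
      (c := c₁ * (B * (c₂ / (n * σ)) ^ 2)) (by positivity) (fun x hx y hy => by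
        rw [abs_mul]
        have e : X (swp S x y) - X S = dw a S x y / (n * σ) := by
          simp only [hX]; rw [wS_swp hs hd hx (mem_compl.mp hy)]; ring
        refine mul_le_mul (h1 x hx y hy) ((hf _ _).trans ?_) (abs_nonneg _) hc₁
        rw [e]
        refine mul_le_mul_of_nonneg_left ?_ hB
        rw [← sq_abs, abs_div, abs_of_pos (show 0 < (n:ℝ) * σ by positivity)]
        have := h2 x hx y hy
        gcongr)
    rw [div_le_iff₀ (by positivity)]
    refine this.trans ?_
    have e : B * (c₁ * c₂ ^ 2) / (2 * (n:ℝ) ^ 2 * σ ^ 3) * (4 * ((n:ℝ) - 1) * (n * σ)) =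
      (B * (c₁ * c₂ ^ 2) / σ ^ 2) * (2 * (n - 1) / n) := by field_simp; ring
    have e2 : (n:ℝ) ^ 2 * (c₁ * (B * (c₂ / (n * σ)) ^ 2)) = (B * (c₁ * c₂ ^ 2) / σ ^ 2) * 1 := by
      field_simp
    rw [e, e2]
    refine mul_le_mul_of_nonneg_left ?_ (by positivity)
    rw [le_div_iff₀ hnpos]; linarith
  have hTb : ∀ S, |Tstat a k S| ≤ 4 * n := by
    intro S
    unfold Tstat
    rw [abs_div, abs_of_pos (show 0 < 4 * ((n:ℝ) - 1) * n ^ 2 by positivity), div_le_iff₀ (by positivity)]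
    have := abs_double_sum_le S (fun x y => dpsi a β S x y * dw a S x y) (c := (4 * n) * (2 * n))
      (by positivity) (fun x _ y _ => by
        rw [abs_mul]
        exact mul_le_mul (abs_dpsi_le ha hβ0 hβ1 S x y) (abs_dw_le ha S x y) (abs_nonneg _)
          (by positivity))
    refine this.trans ?_
    nlinarith [mul_le_mul_of_nonneg_left hn1 (show (0:ℝ) ≤ 16 * n ^ 3 by positivity)]
  have hper : ∀ S ∈ kSets n k, |f' (X S) * (1 - Tstat a k S / σ ^ 2) - rem S| ≤
      (2 * κ / σ ^ 2 + B * L ^ 3 / (2 * n ^ 2 * σ ^ 3)) +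
        (if Bad S then 1 else 0) * (2 + 8 * n / σ ^ 2 + 8 * n * B / σ ^ 3) := by
    intro S hS
    refine (abs_sub _ _).trans ?_
    rw [abs_mul]
    have e : 1 - Tstat a k S / σ ^ 2 = (σ ^ 2 - Tstat a k S) / σ ^ 2 := by field_simp
    split_ifs with hb
    · have r := hremb S (4 * n) (2 * n) (by positivity) (by positivity)
        (fun x _ y _ => abs_dpsi_le ha hβ0 hβ1 S x y) (fun x _ y _ => abs_dw_le ha S x y)
      have e3 : B * (4 * (n:ℝ) * (2 * n) ^ 2) / (2 * n ^ 2 * σ ^ 3) = 8 * n * B / σ ^ 3 := by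
        field_simp; ring
      have t : |1 - Tstat a k S / σ ^ 2| ≤ 1 + 4 * n / σ ^ 2 := by
        refine (abs_sub _ _).trans ?_
        rw [abs_one, abs_div, abs_of_pos (show 0 < σ ^ 2 by positivity)]
        gcongr; exact hTb S
      have m := mul_le_mul (hf' (X S)) t (abs_nonneg _) (by norm_num)
      have g0 : 0 ≤ 2 * κ / σ ^ 2 + B * L ^ 3 / (2 * n ^ 2 * σ ^ 3) := by positivity
      rw [e3] at r
      have e4 : 2 * (1 + 4 * (n:ℝ) / σ ^ 2) = 2 + 8 * n / σ ^ 2 := by ring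
      linarith
    · have r := hremb S L L hL hL (hdp S hS hb) (hdw S hS hb)
      have t : |1 - Tstat a k S / σ ^ 2| ≤ κ / σ ^ 2 := by
        rw [e, abs_div, abs_sub_comm, abs_of_pos (show 0 < σ ^ 2 by positivity)]
        gcongr; exact hT S hS hb
      have m := mul_le_mul (hf' (X S)) t (abs_nonneg _) (by norm_num)
      have e5 : L * L ^ 2 = L ^ 3 := by ring
      rw [e5] at r
      have e4 : 2 * (κ / σ ^ 2) = 2 * κ / σ ^ 2 := by ring
      linarith
  have hne : (0:ℝ) < (kSets n k).card := by
    have : (kSets n k).card = n.choose k := by simp [kSets]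
    rw [this]; exact_mod_cast Nat.choose_pos hkn
  unfold Exu
  rw [hdecomp, abs_div, abs_of_pos hne, div_le_iff₀ hne]
  refine (abs_sum_le_sum_abs _ _).trans ((sum_le_sum hper).trans ?_)
  rw [sum_add_distrib, sum_const, nsmul_eq_mul, ← sum_mul]
  have hb2 := hbad
  rw [Pru_eq_sum, div_le_iff₀ hne] at hb2
  have hpos : 0 ≤ 2 + 8 * n / σ ^ 2 + 8 * n * B / σ ^ 3 := by positivity
  have := mul_le_mul_of_nonneg_right hb2 hpos
  nlinarith

end pair

/-! ### Swap increments as linear forms in the edge indicators -/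

section link
variable {n : ℕ}

/-- The centred adjacency matrix of `G`: entries `1[uv ∈ G] - p` off the diagonal, `0` on it. -/
def amat (p : ℝ) (G : Finset (Sym2 (Fin n))) (u v : Fin n) : ℝ :=
  if u = v then 0 else (if s(u, v) ∈ G then 1 else 0) - p

/-- The indicator, as a function of a pair `e`, that `e` joins `v` to a vertex of `U`. -/
def chi (v : Fin n) (U : Finset (Fin n)) (e : Sym2 (Fin n)) : ℝ :=
  ∑ u ∈ U, if u ≠ v ∧ e = s(u, v) then 1 else 0

lemma mem_completeEdges {e : Sym2 (Fin n)} : e ∈ completeEdges n ↔ ¬ e.IsDiag := by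
  simp [completeEdges]

lemma sum_chi (v : Fin n) (U : Finset (Fin n)) (g : Sym2 (Fin n) → ℝ) :
    ∑ e ∈ completeEdges n, chi v U e * g e = ∑ u ∈ U, if u = v then 0 else g s(u, v) := by
  unfold chi
  simp_rw [sum_mul]
  rw [sum_comm]
  refine sum_congr rfl fun u _ => ?_
  by_cases h : u = v
  · simp [h]
  · have hm : s(u, v) ∈ completeEdges n := by simpa [mem_completeEdges] using h
    simp [h, hm]

lemma lin_chi (p : ℝ) (G : Finset (Sym2 (Fin n))) (v : Fin n) (U : Finset (Fin n)) :
    lin p (completeEdges n) (chi v U) G = ∑ u ∈ U, amat p G u v := by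
  unfold lin amat
  exact sum_chi v U _

lemma chi_nonneg (v : Fin n) (U : Finset (Fin n)) (e : Sym2 (Fin n)) : 0 ≤ chi v U e :=
  sum_nonneg fun _ _ => by split_ifs <;> norm_num

lemma chi_mono (v : Fin n) {U U' : Finset (Fin n)} (h : U ⊆ U') (e : Sym2 (Fin n)) :
    chi v U e ≤ chi v U' e :=
  sum_le_sum_of_subset_of_nonneg h fun _ _ _ => by split_ifs <;> norm_num

lemma chi_mk {u w : Fin n} (huw : u ≠ w) (v : Fin n) (U : Finset (Fin n)) :
    chi v U s(u, w) = (if v = w ∧ u ∈ U then 1 else 0) + (if v = u ∧ w ∈ U then 1 else 0) := by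
  unfold chi
  by_cases h1 : v = w
  · subst h1
    have : ∀ x ∈ U, (if x ≠ v ∧ s(u, v) = s(x, v) then (1:ℝ) else 0) = if x = u then 1 else 0 := by
      intro x _
      by_cases hx : x = u
      · subst hx; simp [huw]
      · have : ¬ (x ≠ v ∧ s(u, v) = s(x, v)) := by
          rintro ⟨_, h⟩
          rw [Sym2.eq_iff] at h
          rcases h with h | h
          · exact hx h.1.symm
          · exact huw h.1
        rw [if_neg this, if_neg hx]
    rw [sum_congr rfl this, sum_ite_eq']
    simp [huw.symm]
  · by_cases h2 : v = u
    · subst h2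
      have : ∀ x ∈ U, (if x ≠ v ∧ s(v, w) = s(x, v) then (1:ℝ) else 0) =
          if x = w then 1 else 0 := by
        intro x _
        by_cases hx : x = w
        · subst hx
          rw [if_pos ⟨huw.symm, Sym2.eq_swap⟩, if_pos rfl]
        · have : ¬ (x ≠ v ∧ s(v, w) = s(x, v)) := by
            rintro ⟨h', h⟩
            rw [Sym2.eq_iff] at h
            rcases h with h | h
            · exact h' h.1.symm
            · exact hx h.2.symm
          rw [if_neg this, if_neg hx]
      rw [sum_congr rfl this, sum_ite_eq']
      simp [h1]
    · have : ∀ x ∈ U, (if x ≠ v ∧ s(u, w) = s(x, v) then (1:ℝ) else 0) = 0 := by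
        intro x _
        rw [if_neg]
        rintro ⟨_, h⟩
        rw [Sym2.eq_iff] at h
        rcases h with h | h
        · exact h1 h.2.symm
        · exact h2 h.1.symm
      rw [sum_congr rfl this]
      simp [h1, h2]

lemma chi_le_one (v : Fin n) (U : Finset (Fin n)) {e : Sym2 (Fin n)} (he : e ∈ completeEdges n) :
    chi v U e ≤ 1 := by
  induction e using Sym2.ind with | _ u w
  have huw : u ≠ w := by simpa [mem_completeEdges] using he
  rw [chi_mk huw]
  by_cases h1 : v = w
  · have : ¬ (v = u) := fun h => huw (h.symm.trans h1)
    simp only [this, false_and, if_false]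
    split_ifs <;> norm_num
  · simp only [h1, false_and, if_false]
    split_ifs <;> norm_num

lemma sum_chi_vertices (S : Finset (Fin n)) {e : Sym2 (Fin n)} (he : e ∈ completeEdges n) :
    ∑ v ∈ S, chi v S e = if (∀ v ∈ e, v ∈ S) then 2 else 0 := by
  induction e using Sym2.ind with | _ u w
  have huw : u ≠ w := by simpa [mem_completeEdges] using he
  simp_rw [chi_mk huw, sum_add_distrib, ite_and]
  rw [sum_ite_eq', sum_ite_eq']
  simp only [Sym2.mem_iff, forall_eq_or_imp, forall_eq]
  by_cases h1 : u ∈ S <;> by_cases h2 : w ∈ S <;> simp [h1, h2] ; norm_num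

lemma sum_chi_univ {e : Sym2 (Fin n)} (he : e ∈ completeEdges n) :
    ∑ v, chi v univ e = 2 := by
  rw [sum_chi_vertices univ he]; simp

lemma sum_chi_one (v : Fin n) (U : Finset (Fin n)) :
    ∑ e ∈ completeEdges n, chi v U e = (U.erase v).card := by
  have := sum_chi v U (fun _ => 1)
  simp only [mul_one] at this
  rw [this, card_eq_sum_ones, Nat.cast_sum]
  simp only [Nat.cast_one]
  rw [← filter_ne', sum_filter]
  exact sum_congr rfl fun u _ => by by_cases h : u = v <;> simp [h]

lemma sum_chi_le (v : Fin n) (U : Finset (Fin n)) : ∑ e ∈ completeEdges n, chi v U e ≤ n := by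
  rw [sum_chi_one]; exact cast_card_le _

lemma chi_inner_self (v : Fin n) (U U' : Finset (Fin n)) :
    ∑ e ∈ completeEdges n, chi v U e * chi v U' e = ((U ∩ U').erase v).card := by
  rw [sum_chi, card_eq_sum_ones, Nat.cast_sum]
  simp only [Nat.cast_one]
  rw [← filter_ne', sum_filter, ← filter_mem_eq_inter, sum_filter]
  refine sum_congr rfl fun u _ => ?_
  by_cases h : u = v
  · simp [h]
  · rw [if_neg h, chi_mk h]
    by_cases h2 : u ∈ U' <;> simp [h, h2, Ne.symm h]

lemma chi_inner_ne {v v' : Fin n} (hv : v ≠ v') (U U' : Finset (Fin n)) :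
    ∑ e ∈ completeEdges n, chi v U e * chi v' U' e = if v' ∈ U ∧ v ∈ U' then 1 else 0 := by
  rw [sum_chi]
  have : ∀ u ∈ U, (if u = v then 0 else chi v' U' s(u, v)) =
      if u = v' then (if v ∈ U' then (1:ℝ) else 0) else 0 := by
    intro u _
    by_cases h : u = v
    · subst h; simp [hv]
    · rw [if_neg h, chi_mk h]
      by_cases h2 : u = v'
      · subst h2; simp [Ne.symm hv]
      · simp [Ne.symm h2, Ne.symm hv, h2]
  rw [sum_congr rfl this, sum_ite_eq', ite_and]

/-- Coefficients of `dw` as a linear form in the edge indicators. -/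
def cdw (S : Finset (Fin n)) (i : Fin n × Fin n) (e : Sym2 (Fin n)) : ℝ :=
  chi i.2 (S.erase i.1) e - chi i.1 S e

/-- Coefficients of `dpsi` as a linear form in the edge indicators. -/
def cdp (β : ℝ) (S : Finset (Fin n)) (i : Fin n × Fin n) (e : Sym2 (Fin n)) : ℝ :=
  cdw S i e + β * (chi i.2 univ e - chi i.1 univ e)

lemma lin_cdw (p : ℝ) (G : Finset (Sym2 (Fin n))) (S : Finset (Fin n)) (i : Fin n × Fin n) :
    lin p (completeEdges n) (cdw S i) G = dw (amat p G) S i.1 i.2 := by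
  unfold dw
  rw [← lin_chi, ← lin_chi]
  unfold lin cdw
  rw [← sum_sub_distrib]
  exact sum_congr rfl fun _ _ => by ring

lemma lin_cdp (p β : ℝ) (G : Finset (Sym2 (Fin n))) (S : Finset (Fin n)) (i : Fin n × Fin n) :
    lin p (completeEdges n) (cdp β S i) G = dpsi (amat p G) β S i.1 i.2 := by
  unfold dpsi colSum
  rw [← lin_cdw, ← lin_chi, ← lin_chi]
  unfold lin cdp
  rw [← sum_sub_distrib, mul_sum, ← sum_add_distrib]
  exact sum_congr rfl fun _ _ => by ring

lemma abs_cdw_le (S : Finset (Fin n)) (i : Fin n × Fin n) (e : Sym2 (Fin n)) :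
    |cdw S i e| ≤ chi i.2 univ e + chi i.1 univ e := by
  unfold cdw
  rw [abs_le]
  have h1 := chi_mono i.2 (subset_univ (S.erase i.1)) e
  have h2 := chi_mono i.1 (subset_univ S) e
  constructor <;> linarith [chi_nonneg i.2 (S.erase i.1) e, chi_nonneg i.1 S e,
    chi_nonneg i.2 univ e, chi_nonneg i.1 univ e]

lemma abs_cdp_le {β : ℝ} (h0 : 0 ≤ β) (h1 : β ≤ 1) (S : Finset (Fin n)) (i : Fin n × Fin n)
    (e : Sym2 (Fin n)) : |cdp β S i e| ≤ 2 * (chi i.2 univ e + chi i.1 univ e) := by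
  unfold cdp
  refine (abs_add_le _ _).trans ?_
  have h2 := abs_cdw_le S i e
  rw [abs_mul, abs_of_nonneg h0]
  have h3 : |chi i.2 univ e - chi i.1 univ e| ≤ chi i.2 univ e + chi i.1 univ e := by
    rw [abs_le]; constructor <;> linarith [chi_nonneg i.2 univ e, chi_nonneg i.1 univ e]
  have := mul_le_mul_of_nonneg_right h1 (abs_nonneg (chi i.2 univ e - chi i.1 univ e))
  linarith

lemma sum_dom_le (i : Fin n × Fin n) :
    ∑ e ∈ completeEdges n, 2 * (chi i.2 univ e + chi i.1 univ e) ≤ 4 * n := by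
  rw [← mul_sum, sum_add_distrib]
  linarith [sum_chi_le i.2 univ, sum_chi_le i.1 univ]

lemma sum_sq_le_of_dom (i : Fin n × Fin n) (c : Sym2 (Fin n) → ℝ)
    (h : ∀ e, |c e| ≤ 2 * (chi i.2 univ e + chi i.1 univ e)) :
    ∑ e ∈ completeEdges n, c e ^ 2 ≤ 16 * n := by
  have h2 : ∀ e ∈ completeEdges n, c e ^ 2 ≤ 4 * (2 * (chi i.2 univ e + chi i.1 univ e)) := by
    intro e he
    have := chi_le_one i.2 univ he
    have := chi_le_one i.1 univ he
    rw [← sq_abs]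
    nlinarith [h e, abs_nonneg (c e)]
  refine (sum_le_sum h2).trans ?_
  rw [← mul_sum]
  linarith [sum_dom_le i]

lemma sum_pairs_dom (S : Finset (Fin n)) {e : Sym2 (Fin n)} (he : e ∈ completeEdges n) :
    ∑ i ∈ S ×ˢ Sᶜ, (chi i.2 univ e + chi i.1 univ e) ≤ 4 * n := by
  have h1 : ∑ i ∈ S ×ˢ Sᶜ, (chi i.2 univ e + chi i.1 univ e) ≤
      ∑ i ∈ (univ : Finset (Fin n)) ×ˢ univ, (chi i.2 univ e + chi i.1 univ e) :=
    sum_le_sum_of_subset_of_nonneg (product_subset_product (subset_univ _) (subset_univ _))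
      fun i _ _ => add_nonneg (chi_nonneg _ _ _) (chi_nonneg _ _ _)
  refine h1.trans ?_
  rw [sum_product]
  simp only [sum_add_distrib, sum_chi_univ he, sum_const, card_univ, Fintype.card_fin,
    nsmul_eq_mul, ← mul_sum]
  linarith

lemma cdp_cdw_inner (β : ℝ) {S : Finset (Fin n)} {x y : Fin n} (hx : x ∈ S) (hy : y ∉ S) :
    ∑ e ∈ completeEdges n, cdp β S (x, y) e * cdw S (x, y) e =
      2 * ((S.card : ℝ) - 1) * (1 + β) := by
  have hxy : x ≠ y := fun h => hy (h ▸ hx)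
  have hR : y ∉ S.erase x := fun h => hy (mem_of_mem_erase h)
  have hc : ((S.erase x).card : ℝ) = S.card - 1 := by
    rw [card_erase_of_mem hx, Nat.cast_sub (card_pos.mpr ⟨x, hx⟩)]; simp
  have i1 := chi_inner_self y (S.erase x) (S.erase x)
  have i2 := chi_inner_self x S S
  have i3 := chi_inner_ne hxy.symm (S.erase x) S
  have i4 := chi_inner_self y univ (S.erase x)
  have i5 := chi_inner_self x univ S
  have i6 := chi_inner_ne hxy.symm univ S
  have i7 := chi_inner_ne hxy univ (S.erase x)
  rw [inter_self, erase_eq_of_notMem hR, hc] at i1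
  rw [inter_self, hc] at i2
  rw [univ_inter, erase_eq_of_notMem hR, hc] at i4
  rw [univ_inter, hc] at i5
  simp [hy] at i3 i6 i7
  have e : ∀ e ∈ completeEdges n, cdp β S (x, y) e * cdw S (x, y) e =
      chi y (S.erase x) e * chi y (S.erase x) e - 2 * (chi y (S.erase x) e * chi x S e)
      + chi x S e * chi x S e + β * (chi y univ e * chi y (S.erase x) e - chi y univ e * chi x S e
      - chi x univ e * chi y (S.erase x) e + chi x univ e * chi x S e) := by
    intro e _; simp only [cdp, cdw]; ring
  rw [sum_congr rfl e]
  simp only [sum_add_distrib, sum_sub_distrib, ← mul_sum]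
  rw [i1, i2, i4, i5, i3, i6, i7]
  ring

lemma amat_symm (p : ℝ) (G : Finset (Sym2 (Fin n))) (u v : Fin n) : amat p G u v = amat p G v u := by
  unfold amat
  rw [Sym2.eq_swap]
  simp only [eq_comm]

lemma abs_amat_le {p : ℝ} (h0 : 0 ≤ p) (h1 : p ≤ 1) (G : Finset (Sym2 (Fin n))) (u v : Fin n) :
    |amat p G u v| ≤ 1 := by
  unfold amat
  rw [abs_le]
  split_ifs <;> constructor <;> linarith

/-- The form `wS` of the centred adjacency matrix is the centred edge count. -/
lemma wS_amat (p : ℝ) {G : Finset (Sym2 (Fin n))} (hG : G ⊆ completeEdges n)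
    (S : Finset (Fin n)) : wS (amat p G) S = edgesIn G S - Kr S.card * p := by
  classical
  unfold wS
  rw [sum_comm]
  have h1 : ∀ v ∈ S, ∑ u ∈ S, amat p G u v =
      ∑ e ∈ completeEdges n, chi v S e * (if e ∈ G then 1 else 0) - p * ((S.card : ℝ) - 1) := by
    intro v hv
    rw [← lin_chi, lin]
    simp only [mul_sub, sum_sub_distrib, ← sum_mul]
    rw [sum_chi_one, card_erase_of_mem hv, Nat.cast_sub (card_pos.mpr ⟨v, hv⟩)]
    push_cast; ring
  have h2 : ∑ v ∈ S, ∑ e ∈ completeEdges n, chi v S e * (if e ∈ G then (1:ℝ) else 0) =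
      2 * edgesIn G S := by
    rw [sum_comm]
    simp only [← sum_mul]
    rw [sum_congr rfl fun e he => by rw [sum_chi_vertices S he]]
    unfold edgesIn
    rw [card_eq_sum_ones, Nat.cast_sum, sum_filter, mul_sum]
    simp only [mul_ite, mul_one, mul_zero, Nat.cast_one]
    rw [← sum_filter, filter_mem_eq_inter, inter_eq_right.mpr hG]
  rw [sum_congr rfl h1, sum_sub_distrib, h2, sum_const, nsmul_eq_mul, Kr]
  ring

lemma edgesIn_univ (G : Finset (Sym2 (Fin n))) : edgesIn G univ = G.card := by
  simp [edgesIn]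

lemma amat_total {p : ℝ} {G : Finset (Sym2 (Fin n))} (hG : G ⊆ completeEdges n)
    (hp : p * Nr n = G.card) : ∑ u, ∑ v, amat p G u v = 0 := by
  have h := wS_amat p hG univ
  rw [edgesIn_univ, card_univ, Fintype.card_fin] at h
  unfold wS at h
  have : Kr n = Nr n := rfl
  rw [this] at h
  linarith

lemma colSum_amat {p : ℝ} {G : Finset (Sym2 (Fin n))} (hG : G ⊆ completeEdges n) (v : Fin n) :
    colSum (amat p G) v = dS G univ v - p * ((n:ℝ) - 1) := by
  classical
  have hn : 0 < n := v.pos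
  unfold colSum
  rw [← lin_chi, lin]
  simp only [mul_sub, sum_sub_distrib, ← sum_mul]
  rw [sum_chi_one, card_erase_of_mem (mem_univ v), card_univ, Fintype.card_fin, sum_chi,
    Nat.cast_sub hn]
  have : ∑ u, (if u = v then (0:ℝ) else if s(u, v) ∈ G then 1 else 0) = dS G univ v := by
    unfold dS
    rw [card_eq_sum_ones, Nat.cast_sum, sum_filter]
    refine sum_congr rfl fun u _ => ?_
    by_cases h : u = v
    · subst h
      have : s(u, u) ∉ G := fun h => by simpa [mem_completeEdges] using hG h
      simp [this]
    · rw [Sym2.eq_swap]; simp [h]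
  rw [this]
  push_cast; ring

lemma Vdeg_eq {p : ℝ} (hn : 0 < n) {G : Finset (Sym2 (Fin n))} (hG : G ⊆ completeEdges n)
    (hp : p * Nr n = G.card) : Vdeg G = ∑ v, colSum (amat p G) v ^ 2 := by
  have ht : ∑ v, colSum (amat p G) v = 0 := by
    unfold colSum; rw [sum_comm]; exact amat_total hG hp
  have hn' : (n:ℝ) ≠ 0 := by positivity
  have hc : 2 * (G.card : ℝ) / n = p * ((n:ℝ) - 1) := by
    rw [← hp, Nr]; field_simp
  have hd : ∀ v, (dS G univ v : ℝ) = colSum (amat p G) v + p * ((n:ℝ) - 1) := fun v => by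
    rw [colSum_amat hG]; ring
  unfold Vdeg
  rw [hc]
  simp only [hd, add_sq, sum_add_distrib, sum_const, card_univ, Fintype.card_fin, nsmul_eq_mul]
  rw [← sum_mul, ← mul_sum, ht]
  ring

end link

/-! ### Concentration for a fixed set, and comparison of variances -/

section conc
variable {n : ℕ}

/-- The event, for a fixed `S`, that some swap increment exceeds `L` or that the quadratic form
underlying `Tstat` deviates from its `G(n,p)`-mean by at least `θ`. -/
def BadT (p : ℝ) (k : ℕ) (L θ : ℝ) (G : Finset (Sym2 (Fin n))) (S : Finset (Fin n)) : Prop :=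
  (∃ x ∈ S, ∃ y ∈ Sᶜ, L ≤ |dpsi (amat p G) (((k:ℝ) - 1) / n) S x y| ∨
    L ≤ |dw (amat p G) S x y|) ∨
  θ ≤ |∑ x ∈ S, ∑ y ∈ Sᶜ, dpsi (amat p G) (((k:ℝ) - 1) / n) S x y * dw (amat p G) S x y -
    p * (1 - p) * (k * (n - k) * (2 * ((k:ℝ) - 1) * (1 + ((k:ℝ) - 1) / n)))|

/-- `quad_conc` for the swaps of a fixed `S`: the forms are dominated by
`2 * (chi y univ + chi x univ)`, which is at most `4` with sum at most `4n`, whence `B = 4n` and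
`A = 16n`; `D = 12n` comes from `sum_pairs_dom`. -/
lemma T_conc {p : ℝ} (h0 : 0 ≤ p) (h1 : p ≤ 1) (hn : 2 ≤ n) {k : ℕ} (hk : 1 ≤ k) (hkn : k ≤ n)
    {S : Finset (Fin n)} (hS : S.card = k) {L t θ : ℝ} (hL : 0 < L) (ht : 0 ≤ t)
    (hθ : t + n ^ 2 * (8 * (4 * n) ^ 2 * Real.exp (-(L ^ 2 / (4 * (16 * n))))) ≤ θ) :
    Pb p (completeEdges n) (fun G => BadT p k L θ G S) ≤
      n ^ 2 * (4 * Real.exp (-(L ^ 2 / (4 * (16 * n))))) +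
        2 * Real.exp (-(t ^ 2 / (4 * (Nr n * (L * (12 * n)) ^ 2)))) := by
  have hnr : (2:ℝ) ≤ n := by exact_mod_cast hn
  have hnpos : (0:ℝ) < n := by linarith
  set β := ((k:ℝ) - 1) / n with hβ
  have hβ0 : 0 ≤ β := div_nonneg (by simpa using hk) hnpos.le
  have hβ1 : β ≤ 1 := by
    rw [hβ, div_le_one hnpos]
    have : (k:ℝ) ≤ n := by exact_mod_cast hkn
    linarith
  have hE : 0 < (completeEdges n).card := by
    rw [card_completeEdges]; exact Nat.choose_pos hn
  have dom1 : ∀ i e, |cdw S i e| ≤ 2 * (chi i.2 univ e + chi i.1 univ e) := fun i e => by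
    linarith [abs_cdw_le S i e, chi_nonneg i.2 univ e, chi_nonneg i.1 univ e]
  have dom2 := abs_cdp_le hβ0 hβ1 S
  have q := quad_conc h0 h1 (E := completeEdges n) (S ×ˢ Sᶜ) (cdp β S) (cdw S)
    (A := 16 * n) (D := 12 * n) (L := L) (t := t) (B := 4 * n) (by positivity) (by positivity) hL ht hE
    (fun i _ => sum_sq_le_of_dom i _ (dom2 i)) (fun i _ => sum_sq_le_of_dom i _ (dom1 i))
    (fun i _ => (sum_le_sum fun e _ => dom2 i e).trans (sum_dom_le i))
    (fun i _ => (sum_le_sum fun e _ => dom1 i e).trans (sum_dom_le i))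
    (fun e he => by
      refine (sum_le_sum (g := fun i => 3 * (chi i.2 univ e + chi i.1 univ e)) fun i _ => ?_).trans ?_
      · linarith [dom2 i e, abs_cdw_le S i e]
      · rw [← mul_sum]; linarith [sum_pairs_dom S he])
  have hcard : ((S ×ˢ Sᶜ).card : ℝ) ≤ n ^ 2 := by
    rw [card_product, Nat.cast_mul, pow_two]
    exact mul_le_mul (cast_card_le _) (cast_card_le _) (by positivity) (by positivity)
  have hcc : ((Sᶜ.card : ℕ) : ℝ) = n - k := by
    rw [card_compl, hS, Fintype.card_fin]; push_cast [hkn]; ring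
  have hmean : ∑ i ∈ S ×ˢ Sᶜ, ∑ e ∈ completeEdges n, cdp β S i e * cdw S i e =
      k * (n - k) * (2 * ((k:ℝ) - 1) * (1 + β)) := by
    rw [sum_product]
    rw [sum_congr rfl fun x hx => sum_congr rfl fun y hy =>
      cdp_cdw_inner β hx (mem_compl.mp hy)]
    simp only [sum_const, nsmul_eq_mul, hcc, hS]
    ring
  rw [card_completeEdges_real] at q
  refine le_trans (Pb_mono h0 h1 fun G _ hG => ?_) (q.trans ?_)
  · rcases hG with ⟨x, hx, y, hy, h⟩ | h
    · left
      refine ⟨(x, y), mem_product.mpr ⟨hx, hy⟩, ?_⟩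
      rw [lin_cdp, lin_cdw]; exact h
    · right
      rw [hmean, sum_product]
      simp only [lin_cdp, lin_cdw]
      refine le_trans ?_ (hθ.trans h)
      gcongr
  · gcongr

/-- `quad_conc` for the squares of the centred degrees. -/
lemma V_conc {p : ℝ} (h0 : 0 ≤ p) (h1 : p ≤ 1) (hn : 2 ≤ n) {L t θ : ℝ} (hL : 0 < L) (ht : 0 ≤ t)
    (hθ : t + n * (8 * (n:ℝ) ^ 2 * Real.exp (-(L ^ 2 / (4 * n)))) ≤ θ) :
    Pb p (completeEdges n)
      (fun G => θ ≤ |∑ v, colSum (amat p G) v ^ 2 - p * (1 - p) * (n * ((n:ℝ) - 1))|) ≤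
      n * (4 * Real.exp (-(L ^ 2 / (4 * n)))) +
        2 * Real.exp (-(t ^ 2 / (4 * (Nr n * (L * 4) ^ 2)))) := by
  have hnr : (2:ℝ) ≤ n := by exact_mod_cast hn
  have hnpos : (0:ℝ) < n := by linarith
  have hE : 0 < (completeEdges n).card := by
    rw [card_completeEdges]; exact Nat.choose_pos hn
  have hsq : ∀ v : Fin n, ∑ e ∈ completeEdges n, chi v univ e * chi v univ e = (n:ℝ) - 1 := by
    intro v
    rw [chi_inner_self, inter_self, card_erase_of_mem (mem_univ v), card_univ, Fintype.card_fin,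
      Nat.cast_sub (by omega)]
    simp
  have hA : ∀ v ∈ (univ : Finset (Fin n)), ∑ e ∈ completeEdges n, chi v univ e ^ 2 ≤ (n:ℝ) := by
    intro v _
    simp only [pow_two, hsq]; linarith
  have hB : ∀ v ∈ (univ : Finset (Fin n)), ∑ e ∈ completeEdges n, |chi v univ e| ≤ (n:ℝ) := by
    intro v _
    simp only [abs_of_nonneg (chi_nonneg _ _ _)]; exact sum_chi_le v univ
  have q := quad_conc h0 h1 (E := completeEdges n) univ (fun v => chi v univ) (fun v => chi v univ)
    (A := n) (D := 4) (L := L) (t := t) (B := n) hnpos (by norm_num) hL ht hE hA hA hB hB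
    (fun e he => by
      simp only [abs_of_nonneg (chi_nonneg _ _ _), sum_add_distrib, sum_chi_univ he]; norm_num)
  rw [card_completeEdges_real, card_univ, Fintype.card_fin] at q
  refine le_trans (Pb_mono h0 h1 fun G _ hG => ?_) q
  right
  simp only [lin_chi, hsq, sum_const, card_univ, Fintype.card_fin, nsmul_eq_mul]
  refine hθ.trans (hG.trans (le_of_eq ?_))
  simp only [colSum, pow_two]

end conc

section variance

/-- The mean of `Tstat` over `G(n,p)`, for any fixed `k`-set. -/
def sig0 (n k p : ℝ) : ℝ := p * (1 - p) * (k * (n - k) * (k - 1) * (n + k - 1)) / (2 * (n - 1) * n ^ 3)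

/-- The variance `Σ₁₁` as a function of `p = M / N` and of the degree statistic `V`. -/
def sigV (n k p V : ℝ) : ℝ :=
  k * (k - 1) * (n - k) * (n - k - 1) / (2 * n ^ 2 * (n - 2) * (n - 3)) *
    (p * (1 - p) + (k - 2) / (n - k - 1) * V / (n * (n - 1) / 2))

lemma sigV_close {n k p V : ℝ} (hn : 6 ≤ n) (hk : 2 ≤ k) (hkn : k + 2 ≤ n) (h0 : 0 ≤ p) (h1 : p ≤ 1)
    {t : ℝ} (hV : |V - p * (1 - p) * (n * (n - 1))| ≤ t) :
    |sigV n k p V - sig0 n k p| ≤ 36 / n + 8 / n ^ 2 * t := by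
  have hn0 : 0 < n := by linarith
  have a1 : 0 < n - 1 := by linarith
  have a2 : 0 < n - 2 := by linarith
  have a3 : 0 < n - 3 := by linarith
  have a4 : 0 < n - k - 1 := by linarith
  have a5 : 0 ≤ n - k := by linarith
  have a6 : 0 ≤ k - 1 := by linarith
  have a7 : 0 ≤ k - 2 := by linarith
  set v := V - p * (1 - p) * (n * (n - 1)) with hv
  have hVe : V = v + p * (1 - p) * (n * (n - 1)) := by rw [hv]; ring
  have key : sigV n k p V - sig0 n k p =
      p * (1 - p) * (k * (k - 1) * (n - k)) * ((n + k) * (4 * n - 6) - 4 * n ^ 2 + 6) /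
        (2 * n ^ 2 * ((n - 2) * (n - 3) * ((n - 1) * n))) +
      k * (k - 1) * (n - k) * (k - 2) / (n ^ 2 * (n - 2) * (n - 3) * (n * (n - 1))) * v := by
    rw [hVe, sigV, sig0]
    field_simp
    ring
  have hpq0 : 0 ≤ p * (1 - p) := mul_nonneg h0 (by linarith)
  have hpq1 : p * (1 - p) ≤ 1 := by nlinarith
  have h23 : n ^ 2 / 4 ≤ (n - 2) * (n - 3) := by nlinarith
  have h11 : n ^ 2 / 2 ≤ (n - 1) * n := by nlinarith
  have hkk : k * (k - 1) * (n - k) ≤ n ^ 3 := by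
    calc k * (k - 1) * (n - k) ≤ n * n * n := by gcongr <;> linarith
      _ = n ^ 3 := by ring
  have hkk0 : 0 ≤ k * (k - 1) * (n - k) := by positivity
  have hden : n ^ 4 / 8 ≤ (n - 2) * (n - 3) * ((n - 1) * n) := by
    calc n ^ 4 / 8 = n ^ 2 / 4 * (n ^ 2 / 2) := by ring
      _ ≤ _ := mul_le_mul h23 h11 (by positivity) (by positivity)
  rw [key]
  refine (abs_add_le _ _).trans (add_le_add ?_ ?_)
  · rw [abs_div, abs_mul, abs_of_nonneg (mul_nonneg hpq0 hkk0),
      abs_of_pos (show 0 < 2 * n ^ 2 * ((n - 2) * (n - 3) * ((n - 1) * n)) by positivity),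
      div_le_iff₀ (by positivity)]
    have b1 : |(n + k) * (4 * n - 6) - 4 * n ^ 2 + 6| ≤ 9 * n ^ 2 := by
      rw [abs_le]; constructor <;> nlinarith
    have b2 : p * (1 - p) * (k * (k - 1) * (n - k)) ≤ n ^ 3 := by
      nlinarith
    calc _ ≤ n ^ 3 * (9 * n ^ 2) := mul_le_mul b2 b1 (abs_nonneg _) (by positivity)
      _ = 36 / n * (2 * n ^ 2 * (n ^ 4 / 8)) := by field_simp; norm_num
      _ ≤ _ := by gcongr
  · rw [abs_mul, abs_of_nonneg (by positivity)]
    refine mul_le_mul ?_ hV (abs_nonneg _) (by positivity)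
    rw [div_le_iff₀ (by positivity)]
    calc k * (k - 1) * (n - k) * (k - 2) ≤ n ^ 3 * n :=
          mul_le_mul hkk (by linarith) a7 (by positivity)
      _ = 8 / n ^ 2 * (n ^ 2 * (n ^ 4 / 8)) := by field_simp
      _ ≤ 8 / n ^ 2 * (n ^ 2 * ((n - 2) * (n - 3) * ((n - 1) * n))) := by gcongr
      _ = _ := by ring

/-- The term of `V` is nonnegative, so `Σ₁₁` is at least its value at `V = 0`. -/
lemma sigV_lower {n k p V δ : ℝ} (hδ : 0 < δ) (hn : 6 ≤ n) (hk : 2 ≤ k) (hkn : k + 2 ≤ n)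
    (h0 : δ ≤ p) (h1 : p ≤ 1 - δ) (hk0 : δ * n ≤ k) (hk1 : δ * n ≤ n - k) (hV : 0 ≤ V) :
    δ ^ 6 / 8 ≤ sigV n k p V := by
  have a1 : 0 < n - 1 := by linarith
  have a2 : 0 < n - 2 := by linarith
  have a3 : 0 < n - 3 := by linarith
  have a4 : 0 < n - k - 1 := by linarith
  have a7 : 0 ≤ k - 2 := by linarith
  have hn0 : 0 < n := by linarith
  have hpq : δ ^ 2 ≤ p * (1 - p) := by nlinarith
  have e1 : (δ * n) ^ 2 / 2 ≤ k * (k - 1) := by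
    have : (δ * n) ^ 2 ≤ k ^ 2 := by gcongr
    nlinarith
  have e2 : (δ * n) ^ 2 / 2 ≤ (n - k) * (n - k - 1) := by
    have : (δ * n) ^ 2 ≤ (n - k) ^ 2 := by gcongr
    nlinarith
  have e3 : (δ * n) ^ 4 / 4 ≤ k * (k - 1) * (n - k) * (n - k - 1) := by
    calc (δ * n) ^ 4 / 4 = (δ * n) ^ 2 / 2 * ((δ * n) ^ 2 / 2) := by ring
      _ ≤ k * (k - 1) * ((n - k) * (n - k - 1)) := by
        apply mul_le_mul e1 e2 (by positivity)
        nlinarith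
      _ = _ := by ring
  have e4 : δ ^ 4 / 8 ≤ k * (k - 1) * (n - k) * (n - k - 1) / (2 * n ^ 2 * (n - 2) * (n - 3)) := by
    rw [le_div_iff₀ (by positivity)]
    refine le_trans ?_ e3
    have : (n - 2) * (n - 3) ≤ n ^ 2 := by nlinarith
    calc δ ^ 4 / 8 * (2 * n ^ 2 * (n - 2) * (n - 3)) = δ ^ 4 / 4 * n ^ 2 * ((n - 2) * (n - 3)) := by ring
      _ ≤ δ ^ 4 / 4 * n ^ 2 * n ^ 2 := by gcongr
      _ = _ := by ring
  unfold sigV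
  have e5 : δ ^ 2 ≤ p * (1 - p) + (k - 2) / (n - k - 1) * V / (n * (n - 1) / 2) := by
    have : 0 ≤ (k - 2) / (n - k - 1) * V / (n * (n - 1) / 2) := by positivity
    linarith
  calc δ ^ 6 / 8 = δ ^ 4 / 8 * δ ^ 2 := by ring
    _ ≤ _ := mul_le_mul e4 e5 (by positivity) (le_trans (by positivity) e4)

end variance

/-! ### The central limit theorem for a good graph -/

section final

lemma Exu_mono {α : Type*} {Ω : Finset α} {f g : α → ℝ} (h : ∀ a ∈ Ω, f a ≤ g a) :
    Exu Ω f ≤ Exu Ω g := by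
  unfold Exu
  exact div_le_div_of_nonneg_right (sum_le_sum h) (by positivity)

lemma Exu_sub_const {α : Type*} {Ω : Finset α} (hΩ : Ω.Nonempty) (f : α → ℝ) (c : ℝ) :
    Exu Ω (fun a => f a - c) = Exu Ω f - c := by
  have : (Ω.card : ℝ) ≠ 0 := by exact_mod_cast hΩ.card_pos.ne'
  unfold Exu
  rw [sum_sub_distrib, sum_const, nsmul_eq_mul]
  field_simp

lemma Pru_eq_Exu {α : Type*} [DecidableEq α] (Ω : Finset α) (P : α → Prop) [DecidablePred P] :
    Pru Ω P = Exu Ω (fun a => if P a then 1 else 0) := by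
  classical
  rw [Pru_eq_sum, Exu]
  congr!

/-- A Stein bound for the functions of `stein_package` gives a Kolmogorov distance bound, by
sandwiching the indicator of `(-∞, z]` between the ramps starting at `z - Δ` and at `z`. -/
lemma kolmogorov_of_stein {α : Type*} {Ω : Finset α} (hΩ : Ω.Nonempty) (X : α → ℝ) {Δ r : ℝ}
    (hΔ : 0 < Δ) (hΔ1 : Δ ≤ 1)
    (H : ∀ f f' : ℝ → ℝ, (∀ w, |f' w| ≤ 2) →
      (∀ a b, |f b - f a - f' a * (b - a)| ≤ 7 / Δ * (b - a) ^ 2) →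
      |Exu Ω (fun S => f' (X S) - X S * f (X S))| ≤ r) (z : ℝ) :
    |Pru Ω (fun S => X S ≤ z) - (gaussianReal 0 1).real (Set.Iic z)| ≤ 2 * Δ + r := by
  classical
  have hs : ∀ z₀ : ℝ, ∃ (h : ℝ → ℝ) (μ : ℝ), (∀ w, 0 ≤ h w) ∧ (∀ w, h w ≤ 1) ∧
      (∀ w, w ≤ z₀ → h w = 1) ∧ (∀ w, z₀ + Δ ≤ w → h w = 0) ∧
      (gaussianReal 0 1).real (Set.Iic z₀) ≤ μ ∧
      μ ≤ (gaussianReal 0 1).real (Set.Iic z₀) + Δ ∧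
      |Exu Ω (fun S => h (X S)) - μ| ≤ r := by
    intro z₀
    obtain ⟨f, f', h, μ, e, b1, b2, h0, h1, h2, h3, m1, m2⟩ := stein_package z₀ hΔ hΔ1
    refine ⟨h, μ, h0, h1, h2, h3, m1, m2, ?_⟩
    have := H f f' b1 b2
    simp only [e] at this
    rwa [Exu_sub_const hΩ] at this
  rw [Pru_eq_Exu, abs_le]
  constructor
  · obtain ⟨h, μ, h0, h1, h2, h3, m1, m2, hr⟩ := hs (z - Δ)
    have hle : Exu Ω (fun S => h (X S)) ≤ Exu Ω (fun S => if X S ≤ z then 1 else 0) := by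
      refine Exu_mono fun S _ => ?_
      split_ifs with hx
      · exact h1 _
      · rw [h3 _ (by linarith)]
    have hl := gauss_cdf_lip (z - Δ) hΔ.le
    rw [sub_add_cancel] at hl
    rw [abs_le] at hr
    linarith
  · obtain ⟨h, μ, h0, h1, h2, h3, m1, m2, hr⟩ := hs z
    have hle : Exu Ω (fun S => if X S ≤ z then 1 else 0) ≤ Exu Ω (fun S => h (X S)) := by
      refine Exu_mono fun S _ => ?_
      split_ifs with hx
      · rw [h2 _ hx]
      · exact h0 _
    rw [abs_le] at hr
    linarith

/-- The constant of the final estimate, with `s = δ³ / 4` a lower bound for `√Σ₁₁`. -/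
def Cfin (s : ℝ) : ℝ := 4 + 114 / s ^ 2 + 60 / s ^ 3

/-- The error of `kolmogorov_of_stein` and `stein_bound` for `Δ = x ^ (-1/4)`, `L = x ^ (1/2 + τ)`,
`κ = 53 x ^ (-1/2 + 2τ)` and exceptional probability `x ^ (-3)`, where `x = n`. -/
lemma err_bound {x τ σ s : ℝ} (hx : 1 ≤ x) (hτ : 0 < τ) (hs : 0 < s) (hσ : s ≤ σ) :
    2 * x ^ (-(1/4:ℝ)) + ((2 * (53 * x ^ (-(1/2:ℝ) + 2 * τ)) / σ ^ 2 +
      7 / x ^ (-(1/4:ℝ)) * (x ^ (1/2 + τ)) ^ 3 / (2 * x ^ 2 * σ ^ 3)) +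
        x ^ (-3:ℝ) * (2 + 8 * x / σ ^ 2 + 8 * x * (7 / x ^ (-(1/4:ℝ))) / σ ^ 3)) ≤
      Cfin s * x ^ (-(1/4:ℝ) + 4 * τ) := by
  have hx0 : 0 < x := by linarith
  have hσ0 : 0 < σ := by linarith
  have hle : ∀ a : ℝ, a ≤ -(1/4:ℝ) + 4 * τ → x ^ a ≤ x ^ (-(1/4:ℝ) + 4 * τ) := fun a ha =>
    Real.rpow_le_rpow_of_exponent_le hx ha
  set u := x ^ (-(1/4:ℝ) + 4 * τ) with hu
  have hu0 : 0 < u := Real.rpow_pos_of_pos hx0 _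
  have e1 : 7 / x ^ (-(1/4:ℝ)) = 7 * x ^ (1/4:ℝ) := by
    rw [Real.rpow_neg hx0.le]; field_simp
  have e2 : 7 * x ^ (1/4:ℝ) * (x ^ (1/2 + τ)) ^ 3 / (2 * x ^ 2 * σ ^ 3) =
      7 / 2 * x ^ (-(1/4:ℝ) + 3 * τ) / σ ^ 3 := by
    have : x ^ (1/4:ℝ) * (x ^ (1/2 + τ)) ^ 3 = x ^ (-(1/4:ℝ) + 3 * τ) * x ^ 2 := by
      rw [← Real.rpow_natCast, ← Real.rpow_natCast, ← Real.rpow_mul hx0.le, ← Real.rpow_add hx0,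
        ← Real.rpow_add hx0]
      congr 1; push_cast; ring
    rw [mul_assoc 7, this]; field_simp
  have e3 : x ^ (-3:ℝ) * (2 + 8 * x / σ ^ 2 + 8 * x * (7 * x ^ (1/4:ℝ)) / σ ^ 3) =
      2 * x ^ (-3:ℝ) + 8 * x ^ (-2:ℝ) / σ ^ 2 + 56 * x ^ (-(7/4):ℝ) / σ ^ 3 := by
    have a1 : x ^ (-2:ℝ) = x ^ (-3:ℝ) * x := by
      nth_rewrite 3 [← Real.rpow_one x]
      rw [← Real.rpow_add hx0]; norm_num
    have a2 : x ^ (-(7/4):ℝ) = x ^ (-3:ℝ) * x * x ^ (1/4:ℝ) := by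
      rw [← a1, ← Real.rpow_add hx0]; norm_num
    rw [a1, a2]; ring
  rw [e1, e2, e3]
  have b1 := hle (-(1/4)) (by linarith)
  have b2 := hle (-(1/2:ℝ) + 2 * τ) (by linarith)
  have b3 := hle (-(1/4:ℝ) + 3 * τ) (by linarith)
  have b4 := hle (-3) (by linarith)
  have b5 := hle (-2) (by linarith)
  have b6 := hle (-(7/4)) (by linarith)
  calc _ ≤ 2 * u + ((2 * (53 * u) / s ^ 2 + 7 / 2 * u / s ^ 3) +
        (2 * u + 8 * u / s ^ 2 + 56 * u / s ^ 3)) := by gcongr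
    _ = (4 + 114 / s ^ 2 + 59.5 / s ^ 3) * u := by ring
    _ ≤ Cfin s * u := by unfold Cfin; gcongr; norm_num

variable {n : ℕ}

/-- The deterministic part: a graph with typical degree variance for which most `S` are not bad
satisfies the central limit theorem. -/
lemma good_graph {M k : ℕ} {δ τ p : ℝ} (hδ : 0 < δ) (hτ : 0 < τ) (hn : 6 ≤ n) (hδn : 2 ≤ δ * n)
    (hp : p = (M:ℝ) / Nr n) (hp0 : δ ≤ p) (hp1 : p ≤ 1 - δ) (hk0 : δ * n ≤ k)
    (hk1 : δ * n ≤ (n:ℝ) - k) {G : Finset (Sym2 (Fin n))} (hG : G ∈ graphsM n M)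
    (hV : |∑ v, colSum (amat p G) v ^ 2 - p * (1 - p) * (n * ((n:ℝ) - 1))| ≤
      2 * (n:ℝ) ^ (3/2 + 2 * τ))
    (hB : Pru (kSets n k) (BadT p k ((n:ℝ) ^ (1/2 + τ)) (2 * (n:ℝ) ^ (5/2 + 2 * τ)) G) ≤
      (n:ℝ) ^ (-3:ℝ)) (z : ℝ) :
    |Pru (kSets n k) (fun S => Wfun n M k G S ≤ Real.sqrt
      ((2 * Kr k * Kr (n - k) / ((n:ℝ)^2 * (Nr n)^2 * ((n:ℝ) - 2) * ((n:ℝ) - 3))) *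
              ((M:ℝ) * (Nr n - (M:ℝ)) +
                (((k:ℝ) - 2) / (((n - k : ℕ):ℝ) - 1)) * Nr n * Vdeg G)) * z) -
      gaussCdf 0 1 z| ≤ Cfin (δ ^ 3 / 4) * (n:ℝ) ^ (-(1/4:ℝ) + 4 * τ) := by
  obtain ⟨hGE, hGM⟩ := mem_graphsM.mp hG
  have hnr : (6:ℝ) ≤ n := by exact_mod_cast hn
  have hn0 : (0:ℝ) < n := by linarith
  have hk2 : (2:ℝ) ≤ k := by linarith
  have hkn2 : (k:ℝ) + 2 ≤ n := by linarith
  have hkn : k ≤ n := by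
    have : (k:ℝ) ≤ n := by linarith
    exact_mod_cast this
  have hk1' : 1 ≤ k := by
    have : (1:ℝ) ≤ k := by linarith
    exact_mod_cast this
  have hN : 0 < Nr n := by
    unfold Nr
    have : 0 < (n:ℝ) - 1 := by linarith
    positivity
  have hM : (M:ℝ) = p * Nr n := by rw [hp]; field_simp
  have hpG : p * Nr n = G.card := by rw [hGM, hM]
  have hp0' : 0 ≤ p := by linarith
  have hp1' : p ≤ 1 := by linarith
  have hVe := Vdeg_eq (p := p) (by omega) hGE hpG
  rw [← hVe] at hV
  have hV0 : 0 ≤ Vdeg G := by rw [hVe]; positivity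
  have hSig : (2 * Kr k * Kr (n - k) / ((n:ℝ)^2 * (Nr n)^2 * ((n:ℝ) - 2) * ((n:ℝ) - 3))) *
              ((M:ℝ) * (Nr n - (M:ℝ)) +
                (((k:ℝ) - 2) / (((n - k : ℕ):ℝ) - 1)) * Nr n * Vdeg G) =
      sigV n k p (Vdeg G) := by
    have a1 : (n:ℝ) - 1 ≠ 0 := by linarith
    have a2 : (n:ℝ) - 2 ≠ 0 := by linarith
    have a3 : (n:ℝ) - 3 ≠ 0 := by linarith
    have a4 : (n:ℝ) - k - 1 ≠ 0 := by linarith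
    unfold sigV Kr
    rw [Nat.cast_sub hkn, hM]
    change _ = _ * (p * (1 - p) + _ / Nr n)
    field_simp
  rw [hSig]
  have hlow := sigV_lower hδ hnr hk2 hkn2 hp0 hp1 hk0 hk1 hV0
  have hclose := sigV_close hnr hk2 hkn2 hp0' hp1' hV
  set vv := sigV n k p (Vdeg G) with hvv
  have hvv0 : 0 < vv := lt_of_lt_of_le (by positivity) hlow
  set σ := Real.sqrt vv with hσ
  have hσ2 : σ ^ 2 = vv := Real.sq_sqrt hvv0.le
  have hσs : δ ^ 3 / 4 ≤ σ := by
    apply Real.le_sqrt_of_sq_le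
    have : (0:ℝ) < δ ^ 6 := by positivity
    calc (δ ^ 3 / 4) ^ 2 = δ ^ 6 / 16 := by ring
      _ ≤ δ ^ 6 / 8 := by linarith
      _ ≤ vv := hlow
  have hs0 : 0 < δ ^ 3 / 4 := by positivity
  have hσ0 : 0 < σ := hs0.trans_le hσs
  have hn1 : (1:ℝ) ≤ n := by linarith
  have htot := amat_total hGE hpG
  -- `σ² = Σ₁₁` and the centre `sig0` of `Tstat` differ by no more than the fluctuation of `Tstat`.
  have hclose2 : |vv - sig0 n k p| ≤ 52 * (n:ℝ) ^ (-(1/2:ℝ) + 2 * τ) := by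
    refine hclose.trans ?_
    have c1 : 36 / (n:ℝ) ≤ 36 * (n:ℝ) ^ (-(1/2:ℝ) + 2 * τ) := by
      rw [div_eq_mul_inv, ← Real.rpow_neg_one]
      gcongr
      linarith
    have c2 : 8 / (n:ℝ) ^ 2 * (2 * (n:ℝ) ^ (3/2 + 2 * τ)) = 16 * (n:ℝ) ^ (-(1/2:ℝ) + 2 * τ) := by
      have : (n:ℝ) ^ (3/2 + 2 * τ) = (n:ℝ) ^ (-(1/2:ℝ) + 2 * τ) * (n:ℝ) ^ 2 := by
        rw [← Real.rpow_natCast, ← Real.rpow_add hn0]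
        congr 1; push_cast; ring
      rw [this]; field_simp; norm_num
    linarith
  have hstein : ∀ f f' : ℝ → ℝ, (∀ w, |f' w| ≤ 2) →
      (∀ a b, |f b - f a - f' a * (b - a)| ≤ 7 / (n:ℝ) ^ (-(1/4:ℝ)) * (b - a) ^ 2) → _ :=
    fun f f' h1 h2 =>
    stein_bound (amat_symm p G) (fun u => by simp [amat]) htot (abs_amat_le hp0' hp1' G)
      (k := k) (by omega) hk1' hkn (f := f) (f' := f') (B := 7 / (n:ℝ) ^ (-(1/4:ℝ))) (by positivity)
      h1 h2 (σ := σ) (κ := 53 * (n:ℝ) ^ (-(1/2:ℝ) + 2 * τ)) (L := (n:ℝ) ^ (1/2 + τ))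
      (s := (n:ℝ) ^ (-3:ℝ)) hσ0 (by positivity) (by positivity) _ hB
      (fun S hS hb => by
        unfold BadT at hb
        push Not at hb
        have hb2 := hb.2
        have e1 : Tstat (amat p G) k S - sig0 n k p =
            (∑ x ∈ S, ∑ y ∈ Sᶜ, dpsi (amat p G) (((k:ℝ) - 1) / n) S x y * dw (amat p G) S x y -
              p * (1 - p) * (k * (n - k) * (2 * ((k:ℝ) - 1) * (1 + ((k:ℝ) - 1) / n)))) /
              (4 * ((n:ℝ) - 1) * n ^ 2) := by
          have a1 : (n:ℝ) - 1 ≠ 0 := by linarith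
          unfold Tstat sig0
          rw [sub_div]
          field_simp
          ring
        have e2 : |Tstat (amat p G) k S - sig0 n k p| ≤ (n:ℝ) ^ (-(1/2:ℝ) + 2 * τ) := by
          have a1 : 0 < (n:ℝ) - 1 := by linarith
          rw [e1, abs_div, abs_of_pos (show 0 < 4 * ((n:ℝ) - 1) * n ^ 2 by positivity),
            div_le_iff₀ (by positivity)]
          refine hb2.le.trans ?_
          have : (n:ℝ) ^ (5/2 + 2 * τ) = (n:ℝ) ^ (-(1/2:ℝ) + 2 * τ) * (n:ℝ) ^ 3 := by
            rw [← Real.rpow_natCast, ← Real.rpow_add hn0]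
            congr 1; push_cast; ring
          rw [this, mul_left_comm]
          refine mul_le_mul_of_nonneg_left ?_ (by positivity)
          nlinarith [pow_pos hn0 2]
        rw [hσ2]
        have := abs_sub_le (Tstat (amat p G) k S) (sig0 n k p) vv
        rw [abs_sub_comm (sig0 (n:ℝ) k p)] at this
        linarith)
      (fun S hS hb x hx y hy => by
        unfold BadT at hb
        push Not at hb
        exact (hb.1 x hx y hy).2.le)
      (fun S hS hb x hx y hy => by
        unfold BadT at hb
        push Not at hb
        exact (hb.1 x hx y hy).1.le)
  have hne : (kSets n k).Nonempty := by
    unfold kSets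
    rw [powersetCard_nonempty]
    simpa using hkn
  have hΔ1 : (n:ℝ) ^ (-(1/4:ℝ)) ≤ 1 := Real.rpow_le_one_of_one_le_of_nonpos hn1 (by norm_num)
  have hK := kolmogorov_of_stein hne (fun S => wS (amat p G) S / (n * σ))
    (Real.rpow_pos_of_pos hn0 _) hΔ1 hstein z
  refine le_trans (le_of_eq ?_) (hK.trans (err_bound hn1 hτ hs0 hσs))
  have hcdf : gaussCdf 0 1 z = (gaussianReal 0 1).real (Set.Iic z) := by
    unfold gaussCdf; rw [Real.toNNReal_one]; rfl
  rw [hcdf]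
  congr 2
  -- `W` is `wS / n` for the centred adjacency matrix, and `σ > 0` permits dividing.
  have hiff : ∀ S ∈ kSets n k, (Wfun n M k G S ≤ σ * z ↔ wS (amat p G) S / (n * σ) ≤ z) := by
    intro S hS
    have : Wfun n M k G S = wS (amat p G) S / n := by
      unfold Wfun muP
      rw [wS_amat p hGE, mem_kSets.mp hS, hp]
      ring
    rw [this, ← div_div, div_le_iff₀ hσ0, mul_comm]
  exact le_antisymm (Pru_mono fun S hS => (hiff S hS).1) (Pru_mono fun S hS => (hiff S hS).2)

end final

/-! ### Most graphs are good -/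

section prob
variable {n : ℕ}

lemma Nr_le (hn : 2 ≤ n) : Nr n ≤ (n:ℝ) ^ 2 / 2 ∧ Nr n + 1 ≤ (n:ℝ) ^ 2 ∧ 0 < Nr n := by
  have : (2:ℝ) ≤ n := by exact_mod_cast hn
  unfold Nr
  refine ⟨by nlinarith, by nlinarith, by nlinarith⟩

lemma Pb_nonneg {p : ℝ} (h0 : 0 ≤ p) (h1 : p ≤ 1) {ι : Type*} [DecidableEq ι] (E : Finset ι)
    (P : Finset ι → Prop) : 0 ≤ Pb p E P := by
  classical
  unfold Pb Eb
  have : 0 ≤ 1 - p := by linarith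
  exact sum_nonneg fun G _ => mul_nonneg (by positivity) (by dsimp only; split_ifs <;> norm_num)

lemma L_sq {x τ : ℝ} (hx : 0 < x) : (x ^ (1/2 + τ)) ^ 2 = x * x ^ (2 * τ) := by
  nth_rewrite 2 [← Real.rpow_one x]
  rw [← Real.rpow_natCast, ← Real.rpow_mul hx.le, ← Real.rpow_add hx]
  congr 1; push_cast; ring

/-- For a fixed set `S`, few graphs are bad: `T_conc` with `L = n ^ (1/2 + τ)` and
`t = n ^ (5/2 + 2τ)`, transferred to `G(n,M)`. The constant `288 = 4 * 12 ^ 2 / 2` comes from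
the bounded-differences term and `N ≤ n ^ 2 / 2`. -/
lemma prob_T {M k : ℕ} {τ p : ℝ} (hτ : 0 < τ) (hn : 2 ≤ n)
    (hM : 0 < M) (hMN : M < (completeEdges n).card) (hp : p = (M:ℝ) / Nr n) (h0 : 0 ≤ p)
    (h1 : p ≤ 1) (hk : 1 ≤ k) (hkn : k ≤ n)
    (hr : 128 * (n:ℝ) ^ 4 * Real.exp (-((n:ℝ) ^ (2 * τ) / 288)) ≤ 1)
    {S : Finset (Fin n)} (hS : S ∈ kSets n k) :
    Pru (graphsM n M)
      (fun G => BadT p k ((n:ℝ) ^ (1/2 + τ)) (2 * (n:ℝ) ^ (5/2 + 2 * τ)) G S) ≤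
      6 * (n:ℝ) ^ 4 * Real.exp (-((n:ℝ) ^ (2 * τ) / 288)) := by
  have hnr : (2:ℝ) ≤ n := by exact_mod_cast hn
  have hn0 : (0:ℝ) < n := by linarith
  have hn1 : (1:ℝ) ≤ n := by linarith
  obtain ⟨N1, N2, N3⟩ := Nr_le hn
  set r := Real.exp (-((n:ℝ) ^ (2 * τ) / 288)) with hrdef
  have hr0 : 0 < r := Real.exp_pos _
  set L := (n:ℝ) ^ (1/2 + τ) with hL
  set t := (n:ℝ) ^ (5/2 + 2 * τ) with ht
  have hL0 : 0 < L := Real.rpow_pos_of_pos hn0 _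
  have ht0 : 0 < t := Real.rpow_pos_of_pos hn0 _
  have ht1 : 1 ≤ t := Real.one_le_rpow hn1 (by positivity)
  have hy0 : 0 < (n:ℝ) ^ (2 * τ) := Real.rpow_pos_of_pos hn0 _
  have hL2 : L ^ 2 = n * (n:ℝ) ^ (2 * τ) := L_sq hn0
  have ht2 : t ^ 2 = (n:ℝ) ^ 5 * ((n:ℝ) ^ (2 * τ)) ^ 2 := by
    rw [ht, ← Real.rpow_natCast, ← Real.rpow_mul hn0.le, ← Real.rpow_natCast, ← Real.rpow_natCast,
      ← Real.rpow_mul hn0.le, ← Real.rpow_add hn0]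
    congr 1; push_cast; ring
  have q1 : Real.exp (-(L ^ 2 / (4 * (16 * n)))) ≤ r := by
    rw [hrdef, Real.exp_le_exp, neg_le_neg_iff, hL2, div_le_div_iff₀ (by norm_num) (by positivity)]
    nlinarith [mul_pos hn0 hy0]
  have q2 : Real.exp (-(t ^ 2 / (4 * (Nr n * (L * (12 * n)) ^ 2)))) ≤ r := by
    rw [hrdef, Real.exp_le_exp, neg_le_neg_iff, div_le_div_iff₀ (by norm_num) (by positivity),
      ht2, mul_pow, hL2]
    calc (n:ℝ) ^ (2 * τ) * (4 * (Nr n * (n * (n:ℝ) ^ (2 * τ) * (12 * n) ^ 2)))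
        ≤ (n:ℝ) ^ (2 * τ) * (4 * ((n:ℝ) ^ 2 / 2 * (n * (n:ℝ) ^ (2 * τ) * (12 * n) ^ 2))) := by gcongr
      _ = _ := by ring
  have hθ : t + n ^ 2 * (8 * (4 * n) ^ 2 * Real.exp (-(L ^ 2 / (4 * (16 * n))))) ≤ 2 * t := by
    have : (n:ℝ) ^ 2 * (8 * (4 * n) ^ 2 * Real.exp (-(L ^ 2 / (4 * (16 * n))))) ≤
        n ^ 2 * (8 * (4 * n) ^ 2 * r) := by gcongr
    have e : (n:ℝ) ^ 2 * (8 * (4 * n) ^ 2 * r) = 128 * (n:ℝ) ^ 4 * r := by ring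
    linarith
  have hc := T_conc h0 h1 hn hk hkn (mem_kSets.mp hS) hL0 ht0.le hθ
  have htr := transfer hM hMN (fun G => BadT p k L (2 * t) G S) hp
  refine htr.trans ?_
  calc (Nr n + 1) * Pb p (completeEdges n) (fun G => BadT p k L (2 * t) G S)
      ≤ (n:ℝ) ^ 2 * (n ^ 2 * (4 * r) + 2 * r) := by
        refine mul_le_mul N2 (hc.trans (by gcongr)) ?_ (by positivity)
        exact Pb_nonneg h0 h1 _ _
    _ ≤ (n:ℝ) ^ 2 * (n ^ 2 * (4 * r) + 2 * (n ^ 2 * r)) := by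
        gcongr
        have : 1 ≤ (n:ℝ) ^ 2 := one_le_pow₀ hn1
        nlinarith
    _ = _ := by ring

/-- `V_conc` with `t = n ^ (3/2 + 2τ)`, transferred to `G(n,M)`; the exponent is weakened to that of
`prob_T`. -/
lemma prob_V {M : ℕ} {τ p : ℝ} (hτ : 0 < τ) (hn : 2 ≤ n)
    (hM : 0 < M) (hMN : M < (completeEdges n).card) (hp : p = (M:ℝ) / Nr n) (h0 : 0 ≤ p)
    (h1 : p ≤ 1) (hr : 128 * (n:ℝ) ^ 4 * Real.exp (-((n:ℝ) ^ (2 * τ) / 288)) ≤ 1) :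
    Pru (graphsM n M) (fun G => 2 * (n:ℝ) ^ (3/2 + 2 * τ) ≤
      |∑ v, colSum (amat p G) v ^ 2 - p * (1 - p) * (n * ((n:ℝ) - 1))|) ≤
      6 * (n:ℝ) ^ 4 * Real.exp (-((n:ℝ) ^ (2 * τ) / 288)) := by
  have hnr : (2:ℝ) ≤ n := by exact_mod_cast hn
  have hn0 : (0:ℝ) < n := by linarith
  have hn1 : (1:ℝ) ≤ n := by linarith
  obtain ⟨N1, N2, N3⟩ := Nr_le hn
  set r := Real.exp (-((n:ℝ) ^ (2 * τ) / 288)) with hrdef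
  have hr0 : 0 < r := Real.exp_pos _
  set L := (n:ℝ) ^ (1/2 + τ) with hL
  set t := (n:ℝ) ^ (3/2 + 2 * τ) with ht
  have hL0 : 0 < L := Real.rpow_pos_of_pos hn0 _
  have ht0 : 0 < t := Real.rpow_pos_of_pos hn0 _
  have ht1 : 1 ≤ t := Real.one_le_rpow hn1 (by positivity)
  have hy0 : 0 < (n:ℝ) ^ (2 * τ) := Real.rpow_pos_of_pos hn0 _
  have hL2 : L ^ 2 = n * (n:ℝ) ^ (2 * τ) := L_sq hn0
  have ht2 : t ^ 2 = (n:ℝ) ^ 3 * ((n:ℝ) ^ (2 * τ)) ^ 2 := by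
    rw [ht, ← Real.rpow_natCast, ← Real.rpow_mul hn0.le, ← Real.rpow_natCast, ← Real.rpow_natCast,
      ← Real.rpow_mul hn0.le, ← Real.rpow_add hn0]
    congr 1; push_cast; ring
  have q1 : Real.exp (-(L ^ 2 / (4 * n))) ≤ r := by
    rw [hrdef, Real.exp_le_exp, neg_le_neg_iff, hL2, div_le_div_iff₀ (by norm_num) (by positivity)]
    nlinarith [mul_pos hn0 hy0]
  have q2 : Real.exp (-(t ^ 2 / (4 * (Nr n * (L * 4) ^ 2)))) ≤ r := by
    rw [hrdef, Real.exp_le_exp, neg_le_neg_iff, div_le_div_iff₀ (by norm_num) (by positivity),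
      ht2, mul_pow, hL2]
    calc (n:ℝ) ^ (2 * τ) * (4 * (Nr n * (n * (n:ℝ) ^ (2 * τ) * 4 ^ 2)))
        ≤ (n:ℝ) ^ (2 * τ) * (4 * ((n:ℝ) ^ 2 / 2 * (n * (n:ℝ) ^ (2 * τ) * 4 ^ 2))) := by gcongr
      _ = (n:ℝ) ^ 3 * ((n:ℝ) ^ (2 * τ)) ^ 2 * 32 := by ring
      _ ≤ _ := by gcongr; norm_num
  have hn34 : (n:ℝ) ^ 3 ≤ (n:ℝ) ^ 4 := pow_le_pow_right₀ hn1 (by norm_num)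
  have hθ : t + n * (8 * (n:ℝ) ^ 2 * Real.exp (-(L ^ 2 / (4 * n)))) ≤ 2 * t := by
    have : (n:ℝ) * (8 * (n:ℝ) ^ 2 * Real.exp (-(L ^ 2 / (4 * n)))) ≤
        n * (8 * (n:ℝ) ^ 2 * r) := by gcongr
    have e : (n:ℝ) * (8 * (n:ℝ) ^ 2 * r) = 8 * ((n:ℝ) ^ 3 * r) := by ring
    have e2 : (n:ℝ) ^ 3 * r ≤ (n:ℝ) ^ 4 * r := by gcongr
    have e3 : 0 < (n:ℝ) ^ 4 * r := by positivity
    linarith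
  have hc := V_conc h0 h1 hn hL0 ht0.le hθ
  have htr := transfer hM hMN (fun G => 2 * t ≤
    |∑ v, colSum (amat p G) v ^ 2 - p * (1 - p) * (n * ((n:ℝ) - 1))|) hp
  refine htr.trans ?_
  calc _ ≤ (n:ℝ) ^ 2 * (n * (4 * r) + 2 * r) := by
        refine mul_le_mul N2 (hc.trans (by gcongr)) ?_ (by positivity)
        exact Pb_nonneg h0 h1 _ _
    _ ≤ (n:ℝ) ^ 2 * (n ^ 2 * (4 * r) + 2 * (n ^ 2 * r)) := by
        have h2 : 1 ≤ (n:ℝ) ^ 2 := one_le_pow₀ hn1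
        have h3 : (n:ℝ) ≤ (n:ℝ) ^ 2 := by nlinarith
        gcongr
        nlinarith
    _ = _ := by ring

/-- The exponential tails beat every polynomial factor in the argument. -/
lemma eventually_small {τ : ℝ} (hτ : 0 < τ) : ∀ᶠ n : ℕ in Filter.atTop,
    12 * (n:ℝ) ^ 7 * Real.exp (-((n:ℝ) ^ (2 * τ) / 288)) ≤ Real.exp (-(n:ℝ) ^ τ) := by
  have hy : Filter.Tendsto (fun n : ℕ => (n:ℝ) ^ τ) Filter.atTop Filter.atTop :=
    (tendsto_rpow_atTop hτ).comp tendsto_natCast_atTop_atTop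
  have h1 := (tendsto_rpow_mul_exp_neg_mul_atTop_nhds_zero (7 / τ) 1 one_pos).comp hy
  have h2 := h1.eventually (gt_mem_nhds (show (0:ℝ) < 1 / 12 by norm_num))
  filter_upwards [h2, hy.eventually_ge_atTop 576, Filter.eventually_ge_atTop 1] with n a1 a2 a3
  have hn0 : (0:ℝ) < n := by exact_mod_cast a3
  simp only [Function.comp, neg_mul, one_mul] at a1
  rw [← Real.rpow_mul hn0.le, mul_div_cancel₀ _ hτ.ne'] at a1
  have e7 : (n:ℝ) ^ (7:ℝ) = (n:ℝ) ^ 7 := by exact_mod_cast Real.rpow_natCast (n:ℝ) 7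
  rw [e7] at a1
  set y := (n:ℝ) ^ τ with hydef
  have e2 : (n:ℝ) ^ (2 * τ) = y ^ 2 := by
    rw [hydef, ← Real.rpow_natCast, ← Real.rpow_mul hn0.le]
    congr 1; push_cast; ring
  rw [e2]
  have e3 : Real.exp (-(y ^ 2 / 288)) ≤ Real.exp (-y) * Real.exp (-y) := by
    rw [← Real.exp_add, Real.exp_le_exp]
    nlinarith
  calc 12 * (n:ℝ) ^ 7 * Real.exp (-(y ^ 2 / 288)) ≤
      12 * (n:ℝ) ^ 7 * (Real.exp (-y) * Real.exp (-y)) := by gcongr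
    _ = 12 * ((n:ℝ) ^ 7 * Real.exp (-y)) * Real.exp (-y) := by ring
    _ ≤ 1 * Real.exp (-y) := by gcongr; linarith
    _ = _ := one_mul _

end prob

/-- Lemma 2.8: CLT with graph-dependent variance `Σ₁₁`.
Fix `δ, ε > 0`. There are `C > 0`, `η > 0`, `n₀` such that for all `n ≥ n₀` and `M, k` with
`M/N, k/n ∈ [δ, 1-δ]`, with probability at least `1 - exp(-n^η)` over `G_{n,M}`: for all
`z ∈ ℝ`, `|P_S(W ≤ √Σ₁₁·z) - P(Z' ≤ z)| ≤ C·n^(-1/4+ε)` with `Z'` standard normal and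
`Σ₁₁ = (2KK̄/(n²N²(n-2)(n-3)))·(M(N-M) + ((k-2)/(k̄-1))·N·V)`. -/
theorem stmt_10 (δ ε : ℝ) (hδ : 0 < δ) (hε : 0 < ε) :
    ∃ C > (0:ℝ), ∃ η > (0:ℝ), ∃ n₀ : ℕ, ∀ n ≥ n₀, ∀ M k : ℕ,
      δ ≤ (M : ℝ) / Nr n → (M : ℝ) / Nr n ≤ 1 - δ →
      δ ≤ (k : ℝ) / n → (k : ℝ) / n ≤ 1 - δ →
      PrGnM n M (fun G =>
          let Sig11 : ℝ :=
            (2 * Kr k * Kr (n - k) / ((n:ℝ)^2 * (Nr n)^2 * ((n:ℝ) - 2) * ((n:ℝ) - 3))) *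
              ((M:ℝ) * (Nr n - (M:ℝ)) +
                (((k:ℝ) - 2) / (((n - k : ℕ):ℝ) - 1)) * Nr n * Vdeg G)
          ∀ z : ℝ,
            |Pru (kSets n k) (fun S => Wfun n M k G S ≤ Real.sqrt Sig11 * z) -
              gaussCdf 0 1 z|
            ≤ C * (n:ℝ) ^ (-(1/4 : ℝ) + ε))
        ≥ 1 - Real.exp (-(n:ℝ) ^ η) := by
  set τ := ε / 4 with hτdef
  have hτ : 0 < τ := by positivity
  have hετ : 4 * τ = ε := by rw [hτdef]; ring
  have hδn : ∀ᶠ n : ℕ in Filter.atTop, 2 / δ ≤ (n:ℝ) :=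
    tendsto_natCast_atTop_atTop.eventually_ge_atTop _
  obtain ⟨n₀, hn₀⟩ := Filter.eventually_atTop.mp
    ((eventually_small hτ).and (hδn.and (Filter.eventually_ge_atTop 6)))
  refine ⟨Cfin (δ ^ 3 / 4), by unfold Cfin; positivity, τ, hτ, n₀, ?_⟩
  intro n hn M k hp0 hp1 hk0 hk1
  obtain ⟨hsmall, hδn, hn6⟩ := hn₀ n hn
  rw [div_le_iff₀ hδ, mul_comm] at hδn
  have hnr : (6:ℝ) ≤ n := by exact_mod_cast hn6
  have hnpos : (0:ℝ) < n := by linarith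
  rw [le_div_iff₀ hnpos] at hk0
  rw [div_le_iff₀ hnpos] at hk1
  have hk1' : δ * n ≤ (n:ℝ) - k := by linarith
  obtain ⟨N1, N2, N3⟩ := Nr_le (n := n) (by omega)
  set p := (M:ℝ) / Nr n with hp
  have hM0 : 0 < M := by
    rcases Nat.eq_zero_or_pos M with h | h
    · rw [h] at hp; simp at hp; linarith
    · exact h
  have hMN : M < (completeEdges n).card := by
    have : (M:ℝ) < (completeEdges n).card := by
      rw [card_completeEdges_real]
      have : p < 1 := by linarith
      rwa [hp, div_lt_one N3] at this
    exact_mod_cast this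
  have hk1n : 1 ≤ k := by
    have : (1:ℝ) ≤ k := by linarith
    exact_mod_cast this
  have hkn : k ≤ n := by
    have : (k:ℝ) ≤ n := by linarith
    exact_mod_cast this
  set r := Real.exp (-((n:ℝ) ^ (2 * τ) / 288)) with hr
  set ω := Real.exp (-(n:ℝ) ^ τ) with hω
  have hr0 : 0 < r := Real.exp_pos _
  have hω0 : 0 < ω := Real.exp_pos _
  have hω1 : ω ≤ 1 := by
    rw [hω, Real.exp_le_one_iff]
    have : 0 ≤ (n:ℝ) ^ τ := by positivity
    linarith
  have hn3 : (216:ℝ) ≤ (n:ℝ) ^ 3 := by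
    calc (216:ℝ) = 6 ^ 3 := by norm_num
      _ ≤ _ := by gcongr
  have hx : 0 < (n:ℝ) ^ 4 * r := by positivity
  have h47 : 216 * ((n:ℝ) ^ 4 * r) ≤ (n:ℝ) ^ 7 * r := by
    have : (n:ℝ) ^ 7 * r = (n:ℝ) ^ 3 * ((n:ℝ) ^ 4 * r) := by ring
    rw [this]; gcongr
  have hr128 : 128 * (n:ℝ) ^ 4 * r ≤ 1 := by nlinarith
  have hs3 : (n:ℝ) ^ (-3:ℝ) = ((n:ℝ) ^ 3)⁻¹ := by
    rw [Real.rpow_neg hnpos.le]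
    congr 1
    exact_mod_cast Real.rpow_natCast (n:ℝ) 3
  -- The threshold `n ^ (-3)` beats the trivial bounds of order `n` in `stein_bound`; the Markov
  -- inequality in `quench` pays a factor `n ^ 3` for it.
  have hT : Pru (graphsM n M) (fun G => (n:ℝ) ^ (-3:ℝ) < Pru (kSets n k)
      (BadT p k ((n:ℝ) ^ (1/2 + τ)) (2 * (n:ℝ) ^ (5/2 + 2 * τ)) G)) ≤ ω / 2 := by
    refine quench _ _ _ (by positivity) (fun S hS => ?_) (by positivity)
    refine (prob_T hτ (by omega) hM0 hMN hp (by linarith) (by linarith) hk1n hkn hr128 hS).trans ?_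
    rw [hs3, inv_mul_eq_div, le_div_iff₀ (by positivity)]
    have : 6 * (n:ℝ) ^ 4 * r * (n:ℝ) ^ 3 = (12 * (n:ℝ) ^ 7 * r) / 2 := by ring
    linarith
  have hV := prob_V (M := M) (p := p) hτ (show 2 ≤ n by omega) hM0 hMN hp (by linarith) (by linarith)
    hr128
  have hV2 : 6 * (n:ℝ) ^ 4 * r ≤ ω / 2 := by nlinarith
  have hne : (graphsM n M).Nonempty := by
    rw [← card_pos, card_graphsM]
    exact Nat.choose_pos hMN.le
  unfold PrGnM
  rw [ge_iff_le, Pru_compl hne]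
  refine sub_le_sub_left ?_ 1
  refine le_trans (Pru_mono (Q := fun G => _ ∨ _) ?_)
    ((Pru_or _ _ _).trans ((add_le_add hT (hV.trans hV2)).trans (by linarith)))
  intro G hG hbad
  by_contra hcon
  push Not at hcon
  obtain ⟨c1, c2⟩ := hcon
  apply hbad
  intro Sig11 z
  rw [← hετ]
  exact good_graph hδ hτ hn6 hδn hp hp0 hp1 hk0 hk1' hG c2.le c1 z
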